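/- arXiv:1307.7672 — 4 statements merged into one kernel-verified Lean document; each statement's English description precedes it below -/
import Mathlib

section
/- Let A be a finite-dimensional solvable (left) Leibniz algebra over an algebraically closed field of characteristic zero, and let M be a nonzero finite-dimensional irreducible A-module. Then dim(M) = 1. -/
/-- Span of all brackets `[u, v]` with `u ∈ p`, `v ∈ q`. -/
def bracketSpan {K A : Type*} [Field K] [AddCommGroup A] [Module K A]
    (br : A →ₗ[K] A →ₗ[K] A) (p q : Submodule K A) : Submodule K A :=
  Submodule.span K {x | ∃ a ∈ p, ∃ b ∈ q, br a b = x}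

/-- Derived series: `derSeries br 0 = A` and
`derSeries br (n+1) = [derSeries br n, derSeries br n]`; so `derSeries br n = A^(n+1)`.
The algebra is solvable iff some term vanishes. -/
def derSeries {K A : Type*} [Field K] [AddCommGroup A] [Module K A]
    (br : A →ₗ[K] A →ₗ[K] A) : ℕ → Submodule K A
  | 0 => ⊤
  | n + 1 => bracketSpan br (derSeries br n) (derSeries br n)

/-- Lower central series: `lcs br 0 = A` and `lcs br (n+1) = [A, lcs br n]`;
so `lcs br n = A^(n+1)`.  The algebra is nilpotent iff some term vanishes. -/
def lcs {K A : Type*} [Field K] [AddCommGroup A] [Module K A]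
    (br : A →ₗ[K] A →ₗ[K] A) : ℕ → Submodule K A
  | 0 => ⊤
  | n + 1 => bracketSpan br ⊤ (lcs br n)

/-!
The right kernel `{m | [m, a] = 0 for all a}` is a submodule that contains every `[m, a] + [a, m]`.
On an irreducible module it is either everything or zero, so the right action is either `0` or the
negative of the left action, and irreducibility depends on the left action alone. The left action
represents the algebra by operators forming a solvable Lie algebra, which by Lie's theorem have a
common eigenvector; the line it spans is the whole module.
-/

section RightKernel

variable {R A M : Type*} [Ring R] [AddCommGroup M] [Module R M]

/-- The right kernel `{m | [m, a] = 0 for all a}` of a module whose right action is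
`S a m = [m, a]`. -/
def rightKernel (S : A → Module.End R M) : Submodule R M :=
  ⨅ a, LinearMap.ker (S a)

lemma mem_rightKernel {S : A → Module.End R M} {m : M} :
    m ∈ rightKernel S ↔ ∀ a, S a m = 0 := by
  simp only [rightKernel, Submodule.mem_iInf, LinearMap.mem_ker]

lemma rightKernel_eq_top_iff {S : A → Module.End R M} : rightKernel S = ⊤ ↔ S = 0 := by
  simp only [rightKernel, iInf_eq_top, LinearMap.ker_eq_top, funext_iff, Pi.zero_apply]

variable {br : A → A → A} {T S : A → Module.End R M}

lemma left_apply_mem_rightKernel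
    (hTS : ∀ a b m, T a (S b m) = S b (T a m) + S (br a b) m)
    (a : A) {m : M} (hm : m ∈ rightKernel S) : T a m ∈ rightKernel S := by
  rw [mem_rightKernel] at hm ⊢
  intro b
  simpa only [hm, map_zero, add_zero] using (hTS a b m).symm

lemma right_add_left_mem_rightKernel
    (hTS : ∀ a b m, T a (S b m) = S b (T a m) + S (br a b) m)
    (hST : ∀ a b m, S (br a b) m = S b (S a m) + T a (S b m))
    (a : A) (m : M) : S a m + T a m ∈ rightKernel S := by
  rw [mem_rightKernel]
  intro b
  have h : T a (S b m) = S b (T a m) + (S b (S a m) + T a (S b m)) := by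
    rw [← hST, ← hTS]
  rw [← add_assoc, right_eq_add] at h
  rw [map_add, add_comm, h]

lemma right_eq_zero_or_eq_neg_left
    (hTS : ∀ a b m, T a (S b m) = S b (T a m) + S (br a b) m)
    (hST : ∀ a b m, S (br a b) m = S b (S a m) + T a (S b m))
    (hirr : ∀ N : Submodule R M, (∀ a, ∀ m ∈ N, T a m ∈ N ∧ S a m ∈ N) → N = ⊥ ∨ N = ⊤) :
    S = 0 ∨ S = -T := by
  have hsub : ∀ a, ∀ m ∈ rightKernel S, T a m ∈ rightKernel S ∧ S a m ∈ rightKernel S := by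
    refine fun a m hm ↦ ⟨left_apply_mem_rightKernel hTS a hm, ?_⟩
    rw [mem_rightKernel.1 hm a]
    exact zero_mem _
  rcases hirr _ hsub with hbot | htop
  · right
    ext a m
    have hmem := right_add_left_mem_rightKernel hTS hST a m
    rw [hbot, Submodule.mem_bot] at hmem
    exact eq_neg_of_add_eq_zero_left hmem
  · exact .inl (rightKernel_eq_top_iff.1 htop)

lemma eq_bot_or_eq_top_of_left_invariant
    (hTS : ∀ a b m, T a (S b m) = S b (T a m) + S (br a b) m)
    (hST : ∀ a b m, S (br a b) m = S b (S a m) + T a (S b m))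
    (hirr : ∀ N : Submodule R M, (∀ a, ∀ m ∈ N, T a m ∈ N ∧ S a m ∈ N) → N = ⊥ ∨ N = ⊤)
    (N : Submodule R M) (hN : ∀ a, ∀ m ∈ N, T a m ∈ N) : N = ⊥ ∨ N = ⊤ := by
  refine hirr N fun a m hm ↦ ⟨hN a m hm, ?_⟩
  rcases right_eq_zero_or_eq_neg_left hTS hST hirr with rfl | rfl
  · exact zero_mem N
  · exact neg_mem (hN a m hm)

end RightKernel

/-- The range of a linear map from an algebra with bracket `br` to a Lie algebra, as a Lie
subalgebra. The map is not a `LieHom` because its domain need not be a Lie algebra: it will be the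
left action of a Leibniz algebra. -/
def rangeLieSubalgebra {R A L : Type*} [CommRing R] [AddCommGroup A] [Module R A]
    [LieRing L] [LieAlgebra R L] (br : A → A → A) (T : A →ₗ[R] L)
    (hT : ∀ a b, ⁅T a, T b⁆ = T (br a b)) : LieSubalgebra R L where
  __ := LinearMap.range T
  lie_mem' := by
    rintro _ _ ⟨a, rfl⟩ ⟨b, rfl⟩
    exact ⟨br a b, (hT a b).symm⟩

section Solvable

variable {K A L : Type*} [Field K] [AddCommGroup A] [Module K A] [LieRing L] [LieAlgebra K L]
  {br : A →ₗ[K] A →ₗ[K] A} {T : A →ₗ[K] L}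

lemma lie_mem_map_bracketSpan (hT : ∀ a b, ⁅T a, T b⁆ = T (br a b)) {p q : Submodule K A}
    {x y : L} (hx : x ∈ p.map T) (hy : y ∈ q.map T) : ⁅x, y⁆ ∈ (bracketSpan br p q).map T := by
  obtain ⟨a, ha, rfl⟩ := hx
  obtain ⟨b, hb, rfl⟩ := hy
  exact ⟨br a b, Submodule.subset_span ⟨a, ha, b, hb, rfl⟩, (hT a b).symm⟩

lemma derivedSeries_rangeLieSubalgebra_le (hT : ∀ a b, ⁅T a, T b⁆ = T (br a b)) (n : ℕ) :
    (LieAlgebra.derivedSeries K (rangeLieSubalgebra (br · ·) T hT) n).toSubmodule ≤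
      ((derSeries br n).map T).comap (rangeLieSubalgebra (br · ·) T hT).toSubmodule.subtype := by
  induction n with
  | zero =>
    rintro ⟨_, a, rfl⟩ -
    exact ⟨a, Submodule.mem_top, rfl⟩
  | succ n ih =>
    rw [LieAlgebra.derivedSeries_def, LieAlgebra.derivedSeriesOfIdeal_succ,
      LieSubmodule.lieIdeal_oper_eq_linear_span', Submodule.span_le]
    rintro _ ⟨x, hx, y, hy, rfl⟩
    exact lie_mem_map_bracketSpan hT (ih hx) (ih hy)

lemma isSolvable_rangeLieSubalgebra (hT : ∀ a b, ⁅T a, T b⁆ = T (br a b))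
    {n : ℕ} (hn : derSeries br n = ⊥) :
    LieAlgebra.IsSolvable (rangeLieSubalgebra (br · ·) T hT) := by
  refine LieAlgebra.IsSolvable.mk (R := K) (k := n) ?_
  rw [← LieSubmodule.toSubmodule_eq_bot, eq_bot_iff]
  simpa only [hn, Submodule.map_bot, Submodule.comap_bot, Submodule.ker_subtype] using
    derivedSeries_rangeLieSubalgebra_le hT n

end Solvable

attribute [local instance] LieRing.ofAssociativeRing in
lemma exists_common_eigenvector_of_derSeries_eq_bot {K A M : Type*} [Field K] [CharZero K]
    [AddCommGroup A] [Module K A] [AddCommGroup M] [Module K M] [FiniteDimensional K M]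
    [Nontrivial M] {br : A →ₗ[K] A →ₗ[K] A} {T : A →ₗ[K] Module.End K M}
    (hTT : ∀ a b m, T a (T b m) = T (br a b) m + T b (T a m))
    {n : ℕ} (hn : derSeries br n = ⊥) (htri : ∀ a, ⨆ μ, (T a).maxGenEigenspace μ = ⊤) :
    ∃ (χ : Module.Dual K A) (v : M), v ≠ 0 ∧ ∀ a, T a v = χ a • v := by
  have hT : ∀ a b, ⁅T a, T b⁆ = T (br a b) := fun a b ↦
    LinearMap.ext fun m ↦ sub_eq_of_eq_add (hTT a b m)
  let L := rangeLieSubalgebra (br · ·) T hT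
  have : LieAlgebra.IsSolvable L := isSolvable_rangeLieSubalgebra hT hn
  have : LieModule.IsTriangularizable K L M := ⟨by rintro ⟨_, a, rfl⟩; exact htri a⟩
  obtain ⟨χ, hχ⟩ := LieModule.exists_nontrivial_weightSpace_of_isSolvable K L M
  obtain ⟨v, hv, hv0⟩ := Submodule.exists_mem_ne_zero_of_ne_bot
    (Submodule.nontrivial_iff_ne_bot.1 hχ)
  refine ⟨χ ∘ₗ T.rangeRestrict, v, hv0, fun a ↦ ?_⟩
  exact (LieModule.mem_weightSpace χ v).1 hv ⟨T a, a, rfl⟩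

lemma finrank_eq_one_of_common_eigenvector {K A M : Type*} [DivisionRing K] [AddCommGroup M]
    [Module K M] {T : A → Module.End K M}
    (hirr : ∀ N : Submodule K M, (∀ a, ∀ m ∈ N, T a m ∈ N) → N = ⊥ ∨ N = ⊤)
    {χ : A → K} {v : M} (hv0 : v ≠ 0) (hv : ∀ a, T a v = χ a • v) :
    Module.finrank K M = 1 := by
  have hinv : ∀ a, ∀ m ∈ K ∙ v, T a m ∈ K ∙ v := by
    intro a m hm
    obtain ⟨c, rfl⟩ := Submodule.mem_span_singleton.1 hm
    rw [map_smul, hv, smul_smul]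
    exact Submodule.smul_mem _ _ (Submodule.mem_span_singleton_self v)
  have htop : K ∙ v = ⊤ :=
    (hirr _ hinv).resolve_left (mt Submodule.span_singleton_eq_bot.1 hv0)
  rw [← finrank_top K M, ← htop, finrank_span_singleton hv0]

theorem solvable_leibniz_irreducible_module_dim_one_general
    {K A M : Type*} [Field K] [CharZero K] [AddCommGroup A] [Module K A]
    [AddCommGroup M] [Module K M] [FiniteDimensional K M] [Nontrivial M]
    {br : A →ₗ[K] A →ₗ[K] A} (hsolv : ∃ n, derSeries br n = ⊥)
    {T : A →ₗ[K] Module.End K M} {S : A → Module.End K M}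
    (htri : ∀ a, ⨆ μ, (T a).maxGenEigenspace μ = ⊤)
    (hTT : ∀ a b m, T a (T b m) = T (br a b) m + T b (T a m))
    (hTS : ∀ a b m, T a (S b m) = S b (T a m) + S (br a b) m)
    (hST : ∀ a b m, S (br a b) m = S b (S a m) + T a (S b m))
    (hirr : ∀ N : Submodule K M, (∀ a, ∀ m ∈ N, T a m ∈ N ∧ S a m ∈ N) → N = ⊥ ∨ N = ⊤) :
    Module.finrank K M = 1 := by
  obtain ⟨n, hn⟩ := hsolv
  obtain ⟨χ, v, hv0, hv⟩ := exists_common_eigenvector_of_derSeries_eq_bot hTT hn htri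
  exact finrank_eq_one_of_common_eigenvector
    (eq_bot_or_eq_top_of_left_invariant hTS hST hirr) hv0 hv

/-- a nonzero irreducible module over a finite-dimensional solvable
(left) Leibniz algebra over an algebraically closed field of characteristic zero
is one-dimensional. -/
theorem solvable_leibniz_irreducible_module_dim_one
    {K A M : Type*} [Field K] [IsAlgClosed K] [CharZero K]
    [AddCommGroup A] [Module K A] [FiniteDimensional K A]
    [AddCommGroup M] [Module K M] [FiniteDimensional K M] [Nontrivial M]
    (br : A →ₗ[K] A →ₗ[K] A)
    (leibniz : ∀ a b c : A, br a (br b c) = br (br a b) c + br b (br a c))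
    (hsolv : ∃ m : ℕ, derSeries br m = ⊥)
    (T S : A →ₗ[K] Module.End K M)
    (hTT : ∀ (a b : A) (m : M), T a (T b m) = T (br a b) m + T b (T a m))
    (hTS : ∀ (a b : A) (m : M), T a (S b m) = S b (T a m) + S (br a b) m)
    (hST : ∀ (a b : A) (m : M), S (br a b) m = S b (S a m) + T a (S b m))
    (hirr : ∀ N : Submodule K M,
      (∀ (a : A), ∀ m ∈ N, T a m ∈ N ∧ S a m ∈ N) → N = ⊥ ∨ N = ⊤)
 :
    Module.finrank K M = 1 := by
  exact solvable_leibniz_irreducible_module_dim_one_general hsolv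
    (fun a ↦ Module.End.iSup_maxGenEigenspace_eq_top (T a)) hTT hTS hST hirr
end

section
/- Let A be an n-dimensional solvable (left) Leibniz algebra over an algebraically closed field of characteristic zero. Then there is a chain of ideals 0 = I_0 ⊆ I_1 ⊆ I_2 ⊆ ... ⊆ I_n = A of A such that dim(I_i) = i for i = 1, 2, ..., n. -/
/-!
The squares `[a, a]` act by zero on the left, so `[a, v] + [v, a]` lies in the kernel of left
multiplication, which is an ideal. By Lie's theorem for the solvable Lie algebra of left
multiplications, an ideal `W ≠ A` has an eigenvector `v ∉ W` modulo `W`; when `W` does not contain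
the kernel, `v` is taken in the kernel. Then `[v, a]` lies in `W + K v` as well: either it vanishes,
or it equals `-[a, v]` modulo `W`. So `W + K v` is an ideal of dimension one more.
-/

theorem exists_monotone_finrank_eq_of_forall_exists_finrank_succ
    {R V : Type*} [Semiring R] [Nontrivial R] [AddCommMonoid V] [Module R V]
    (P : Submodule R V → Prop) (hbot : P ⊥)
    (hsucc : ∀ W, P W → W ≠ ⊤ →
      ∃ W', P W' ∧ W ≤ W' ∧ Module.finrank R W' = Module.finrank R W + 1) :
    ∃ I : ℕ → Submodule R V, Monotone I ∧
      ∀ i ≤ Module.finrank R V, P (I i) ∧ Module.finrank R (I i) = i := by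
  have hnext : ∀ W : {W // P W}, ∃ W' : {W // P W}, W.1 ≤ W'.1 ∧
      (W.1 ≠ ⊤ → Module.finrank R W'.1 = Module.finrank R W.1 + 1) := by
    rintro ⟨W, hW⟩
    by_cases htop : W = ⊤
    · exact ⟨⟨W, hW⟩, le_rfl, fun h => absurd htop h⟩
    · obtain ⟨W', hW', hle, hrank⟩ := hsucc W hW htop
      exact ⟨⟨W', hW'⟩, hle, fun _ => hrank⟩
  choose next le_next finrank_next using hnext
  let I : ℕ → {W // P W} := fun i => next^[i] ⟨⊥, hbot⟩
  have I_succ (i : ℕ) : I (i + 1) = next (I i) := Function.iterate_succ_apply' next i _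
  have finrank_I : ∀ i ≤ Module.finrank R V, Module.finrank R (I i).1 = i := by
    intro i hi
    induction i with
    | zero => exact finrank_bot R V
    | succ i ih =>
      have hrank : Module.finrank R (I i).1 = i := ih (by omega)
      have hne : (I i).1 ≠ ⊤ := fun htop => by
        rw [htop, finrank_top] at hrank
        omega
      rw [I_succ, finrank_next _ hne, hrank]
  refine ⟨fun i => (I i).1, monotone_nat_of_le_succ fun i => ?_, fun i hi =>
    ⟨(I i).2, finrank_I i hi⟩⟩
  rw [I_succ]
  exact le_next (I i)

section Triangularizable

variable {R M N : Type*} [CommRing R] [AddCommGroup M] [Module R M] [AddCommGroup N] [Module R N]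

theorem map_maxGenEigenspace_le_of_comp_eq {f : Module.End R M} {g : Module.End R N}
    {π : M →ₗ[R] N} (h : g ∘ₗ π = π ∘ₗ f) (μ : R) :
    (f.maxGenEigenspace μ).map π ≤ g.maxGenEigenspace μ := by
  rintro _ ⟨m, hm, rfl⟩
  obtain ⟨k, hk⟩ := (f.mem_maxGenEigenspace μ m).1 hm
  have hsub : (g - μ • 1) ∘ₗ π = π ∘ₗ (f - μ • 1) := by
    rw [LinearMap.sub_comp, LinearMap.comp_sub, h]
    ext
    simp
  have hpow := Module.End.commute_pow_left_of_commute hsub k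
  refine (g.mem_maxGenEigenspace μ (π m)).2 ⟨k, ?_⟩
  rw [← LinearMap.comp_apply, hpow, LinearMap.comp_apply, hk, map_zero]

theorem isTriangularizable_of_surjective {L : Type*} [LieRing L] [LieAlgebra R L]
    [LieRingModule L M] [LieModule R L M] [LieRingModule L N] [LieModule R L N]
    [LieModule.IsTriangularizable R L M] {π : M →ₗ⁅R,L⁆ N} (hπ : Function.Surjective π) :
    LieModule.IsTriangularizable R L N where
  maxGenEigenspace_eq_top x := by
    have hcomm : LieModule.toEnd R L N x ∘ₗ (π : M →ₗ[R] N) = π ∘ₗ LieModule.toEnd R L M x := by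
      ext m
      simp
    rw [eq_top_iff, ← (LinearMap.range_eq_top (f := (π : M →ₗ[R] N))).2 hπ, ← Submodule.map_top,
      ← LieModule.IsTriangularizable.maxGenEigenspace_eq_top (R := R) (M := M) x,
      Submodule.map_iSup]
    exact iSup_mono fun μ => map_maxGenEigenspace_le_of_comp_eq hcomm μ

end Triangularizable

open scoped Submodule in
theorem exists_notMem_forall_lie_mem_sup_span_singleton {K L V : Type*} [Field K] [CharZero K]
    [LieRing L] [LieAlgebra K L] [LieAlgebra.IsSolvable L] [AddCommGroup V] [Module K V]
    [FiniteDimensional K V] [LieRingModule L V] [LieModule K L V]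
    [LieModule.IsTriangularizable K L V] {W U : LieSubmodule K L V} (hUW : ¬U ≤ W) :
    ∃ v ∈ U, v ∉ W ∧ ∀ x : L, ⁅x, v⁆ ∈ W.toSubmodule ⊔ K ∙ v := by
  let π := LieSubmodule.Quotient.mk' W
  have hπ (x : V) : π x = 0 ↔ x ∈ W := LieSubmodule.Quotient.mk_eq_zero'
  have : LieModule.IsTriangularizable K L (V ⧸ W) :=
    isTriangularizable_of_surjective (LieSubmodule.Quotient.surjective_mk' W)
  obtain ⟨u, huU, huW⟩ := SetLike.not_le_iff_exists.1 hUW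
  have : Nontrivial (U.map π) :=
    nontrivial_of_ne ⟨π u, LieSubmodule.mem_map_of_mem huU⟩ 0 fun h =>
      huW ((hπ u).1 (congrArg Subtype.val h))
  obtain ⟨χ, _⟩ := LieModule.exists_nontrivial_weightSpace_of_isSolvable K L (U.map π)
  obtain ⟨⟨⟨_, hw⟩, hweight⟩, hne⟩ := exists_ne (0 : LieModule.weightSpace (U.map π) χ)
  obtain ⟨v, hvU, rfl⟩ := (LieSubmodule.mem_map _).1 hw
  refine ⟨v, hvU, fun hvW => hne ?_, fun x => ?_⟩
  · ext
    exact (hπ v).2 hvW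
  · have heigen : π ⁅x, v⁆ = χ x • π v :=
      congrArg Subtype.val ((LieModule.mem_weightSpace ..).1 hweight x)
    have hmem : ⁅x, v⁆ - χ x • v ∈ W := by
      rw [← hπ, map_sub, map_smul, heigen, sub_self]
    rw [← sub_add_cancel ⁅x, v⁆ (χ x • v)]
    exact Submodule.add_mem_sup hmem (Submodule.mem_span_singleton.2 ⟨χ x, rfl⟩)

section Leibniz

open scoped Submodule

attribute [local instance] LieRing.ofAssociativeRing

variable {K A : Type*} [Field K] [AddCommGroup A] [Module K A] {br : A →ₗ[K] A →ₗ[K] A}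

/-- The left Leibniz identity for a bilinear bracket: each left multiplication is a derivation. -/
def IsLeftLeibniz (br : A →ₗ[K] A →ₗ[K] A) : Prop :=
  ∀ a b c : A, br a (br b c) = br (br a b) c + br b (br a c)

/-- Two-sided ideals of a (not necessarily associative or unital) algebra, the multiplication being
given as a bilinear map. -/
def IsBracketIdeal (br : A →ₗ[K] A →ₗ[K] A) (I : Submodule K A) : Prop :=
  ∀ a : A, ∀ x ∈ I, br a x ∈ I ∧ br x a ∈ I

theorem isBracketIdeal_bot : IsBracketIdeal br ⊥ := by
  simp [IsBracketIdeal]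

theorem IsBracketIdeal.sup_span_singleton {W : Submodule K A} (hW : IsBracketIdeal br W) {v : A}
    (hleft : ∀ a, br a v ∈ W ⊔ K ∙ v) (hright : ∀ a, br v a ∈ W ⊔ K ∙ v) :
    IsBracketIdeal br (W ⊔ K ∙ v) := by
  intro a x hx
  obtain ⟨w, hw, z, hz, rfl⟩ := Submodule.mem_sup.1 hx
  obtain ⟨c, rfl⟩ := Submodule.mem_span_singleton.1 hz
  simp only [map_add, map_smul, LinearMap.add_apply, LinearMap.smul_apply]
  exact ⟨add_mem (Submodule.mem_sup_left (hW a w hw).1) (Submodule.smul_mem _ c (hleft a)),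
    add_mem (Submodule.mem_sup_left (hW a w hw).2) (Submodule.smul_mem _ c (hright a))⟩

namespace IsLeftLeibniz

theorem lie_apply (h : IsLeftLeibniz br) (a b : A) :
    ⁅(br a : Module.End K A), br b⁆ = br (br a b) := by
  ext c
  exact sub_eq_of_eq_add (h a b c)

theorem isBracketIdeal_ker (h : IsLeftLeibniz br) : IsBracketIdeal br (LinearMap.ker br) := by
  intro a x hx
  rw [LinearMap.mem_ker] at hx
  refine ⟨?_, ?_⟩
  · rw [LinearMap.mem_ker, ← h.lie_apply, hx, lie_zero]
  · rw [hx]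
    exact zero_mem _

theorem add_swap_mem_ker (h : IsLeftLeibniz br) (a b : A) :
    br a b + br b a ∈ LinearMap.ker br := by
  rw [LinearMap.mem_ker, map_add, ← h.lie_apply, ← h.lie_apply, ← lie_skew, neg_add_cancel]

/-- The Lie algebra of left multiplications of a left Leibniz algebra, inside `End A`. Solvability
passes to it, so that Lie's theorem applies to its action on `A`. -/
def leftMulAlgebra (h : IsLeftLeibniz br) : LieSubalgebra K (Module.End K A) where
  __ := LinearMap.range br
  lie_mem' := by
    rintro _ _ ⟨a, rfl⟩ ⟨b, rfl⟩
    exact ⟨br a b, (h.lie_apply a b).symm⟩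

theorem map_derivedSeries_leftMulAlgebra_le (h : IsLeftLeibniz br) (n : ℕ) :
    (LieAlgebra.derivedSeries K h.leftMulAlgebra n).toSubmodule.map
        h.leftMulAlgebra.toSubmodule.subtype ≤
      (derSeries br n).map br := by
  induction n with
  | zero =>
    rintro _ ⟨⟨_, a, rfl⟩, -, rfl⟩
    exact ⟨a, Submodule.mem_top, rfl⟩
  | succ n ih =>
    rw [LieAlgebra.derivedSeries_def, LieAlgebra.derivedSeriesOfIdeal_succ,
      ← LieAlgebra.derivedSeries_def, LieSubmodule.lieIdeal_oper_eq_linear_span',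
      Submodule.map_span_le]
    rintro _ ⟨f, hf, g, hg, rfl⟩
    obtain ⟨a, ha, hfa⟩ := ih (Submodule.mem_map_of_mem hf)
    obtain ⟨b, hb, hgb⟩ := ih (Submodule.mem_map_of_mem hg)
    refine ⟨br a b, Submodule.subset_span ⟨a, ha, b, hb, rfl⟩, ?_⟩
    rw [← h.lie_apply, hfa, hgb]
    rfl

theorem isSolvable_leftMulAlgebra (h : IsLeftLeibniz br) {m : ℕ} (hm : derSeries br m = ⊥) :
    LieAlgebra.IsSolvable h.leftMulAlgebra := by
  refine LieAlgebra.IsSolvable.mk (R := K) (k := m) ?_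
  have hle := h.map_derivedSeries_leftMulAlgebra_le m
  rw [hm, Submodule.map_bot, Submodule.map_le_iff_le_comap, Submodule.comap_bot,
    Submodule.ker_subtype, le_bot_iff] at hle
  exact (LieSubmodule.toSubmodule_eq_bot _).1 hle

theorem isTriangularizable_leftMulAlgebra (h : IsLeftLeibniz br)
    (htri : ∀ a, ⨆ μ, Module.End.maxGenEigenspace (br a) μ = ⊤) :
    LieModule.IsTriangularizable K h.leftMulAlgebra A where
  maxGenEigenspace_eq_top := by
    rintro ⟨_, a, rfl⟩
    exact htri a

/-- A two-sided ideal as a submodule for the Lie algebra of left multiplications; only its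
stability on the left is recorded. -/
def lieSubmodule (h : IsLeftLeibniz br) {W : Submodule K A} (hW : IsBracketIdeal br W) :
    LieSubmodule K h.leftMulAlgebra A where
  __ := W
  lie_mem := by
    rintro ⟨_, a, rfl⟩ x hx
    exact (hW a x hx).1

variable [CharZero K] [FiniteDimensional K A]

theorem exists_notMem_forall_apply_mem_sup_span_singleton (h : IsLeftLeibniz br)
    [LieAlgebra.IsSolvable h.leftMulAlgebra] [LieModule.IsTriangularizable K h.leftMulAlgebra A]
    {W U : Submodule K A} (hW : IsBracketIdeal br W) (hU : IsBracketIdeal br U) (hUW : ¬U ≤ W) :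
    ∃ v ∈ U, v ∉ W ∧ ∀ a, br a v ∈ W ⊔ K ∙ v := by
  obtain ⟨v, hvU, hvW, hv⟩ := exists_notMem_forall_lie_mem_sup_span_singleton
    (W := h.lieSubmodule hW) (U := h.lieSubmodule hU) hUW
  exact ⟨v, hvU, hvW, fun a => hv ⟨br a, a, rfl⟩⟩

theorem exists_notMem_isBracketIdeal_sup_span_singleton (h : IsLeftLeibniz br)
    [LieAlgebra.IsSolvable h.leftMulAlgebra] [LieModule.IsTriangularizable K h.leftMulAlgebra A]
    {W : Submodule K A} (hW : IsBracketIdeal br W) (hne : W ≠ ⊤) :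
    ∃ v ∉ W, IsBracketIdeal br (W ⊔ K ∙ v) := by
  by_cases hker : LinearMap.ker br ≤ W
  · have htop : IsBracketIdeal br ⊤ := fun _ _ _ => ⟨Submodule.mem_top, Submodule.mem_top⟩
    obtain ⟨v, -, hvW, hleft⟩ :=
      h.exists_notMem_forall_apply_mem_sup_span_singleton hW htop (mt top_le_iff.1 hne)
    refine ⟨v, hvW, hW.sup_span_singleton hleft fun a => ?_⟩
    have hsum : br a v + br v a ∈ W ⊔ K ∙ v :=
      Submodule.mem_sup_left (hker (h.add_swap_mem_ker a v))
    exact (add_mem_cancel_left (hleft a)).1 hsum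
  · obtain ⟨v, hvker, hvW, hleft⟩ :=
      h.exists_notMem_forall_apply_mem_sup_span_singleton hW h.isBracketIdeal_ker hker
    refine ⟨v, hvW, hW.sup_span_singleton hleft fun a => ?_⟩
    rw [LinearMap.mem_ker.1 hvker]
    exact zero_mem _

end IsLeftLeibniz

end Leibniz

theorem solvable_leibniz_chain_of_ideals_general
    {K A : Type*} [Field K] [CharZero K]
    [AddCommGroup A] [Module K A] [FiniteDimensional K A]
    (br : A →ₗ[K] A →ₗ[K] A)
    (leibniz : ∀ a b c : A, br a (br b c) = br (br a b) c + br b (br a c))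
    (hsolv : ∃ m : ℕ, derSeries br m = ⊥)
    (htri : ∀ a : A, ⨆ μ : K, Module.End.maxGenEigenspace (br a) μ = ⊤) :
    ∃ I : ℕ → Submodule K A,
      I 0 = ⊥ ∧ I (Module.finrank K A) = ⊤ ∧
      (∀ i : ℕ, i < Module.finrank K A → I i ≤ I (i + 1)) ∧
      (∀ i : ℕ, i ≤ Module.finrank K A →
        (∀ a : A, ∀ x ∈ I i, br a x ∈ I i ∧ br x a ∈ I i) ∧
          Module.finrank K (I i) = i) := by
  have h : IsLeftLeibniz br := leibniz
  obtain ⟨m, hm⟩ := hsolv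
  have := h.isSolvable_leftMulAlgebra hm
  have := h.isTriangularizable_leftMulAlgebra htri
  obtain ⟨I, hmono, hI⟩ := exists_monotone_finrank_eq_of_forall_exists_finrank_succ
    (IsBracketIdeal br) isBracketIdeal_bot fun W hW hne => by
      obtain ⟨v, hvW, hideal⟩ := h.exists_notMem_isBracketIdeal_sup_span_singleton hW hne
      exact ⟨_, hideal, le_sup_left, Submodule.finrank_sup_span_singleton hvW⟩
  exact ⟨I, Submodule.finrank_eq_zero.1 (hI 0 (Nat.zero_le _)).2,
    Submodule.eq_top_of_finrank_eq (hI _ le_rfl).2, fun i _ => hmono i.le_succ, hI⟩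

/-- an `n`-dimensional solvable (left) Leibniz algebra over an
algebraically closed field of characteristic zero has a chain of ideals
`0 = I_0 ⊆ I_1 ⊆ ⋯ ⊆ I_n = A` with `dim (I i) = i`. -/
theorem solvable_leibniz_chain_of_ideals
    {K A : Type*} [Field K] [IsAlgClosed K] [CharZero K]
    [AddCommGroup A] [Module K A] [FiniteDimensional K A]
    (br : A →ₗ[K] A →ₗ[K] A)
    (leibniz : ∀ a b c : A, br a (br b c) = br (br a b) c + br b (br a c))
    (hsolv : ∃ m : ℕ, derSeries br m = ⊥) :
    ∃ I : ℕ → Submodule K A,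
      I 0 = ⊥ ∧ I (Module.finrank K A) = ⊤ ∧
      (∀ i : ℕ, i < Module.finrank K A → I i ≤ I (i + 1)) ∧
      (∀ i : ℕ, i ≤ Module.finrank K A →
        (∀ a : A, ∀ x ∈ I i, br a x ∈ I i ∧ br x a ∈ I i) ∧
          Module.finrank K (I i) = i) :=
  solvable_leibniz_chain_of_ideals_general br leibniz hsolv fun a =>
    Module.End.iSup_maxGenEigenspace_eq_top (br a)
end

section
/- Let A be a finite-dimensional (left) Leibniz algebra over an algebraically closed field of characteristic zero and let R = rad(A) be its solvable radical (the unique maximal solvable ideal of A). Then there exists a subalgebra S of A which is a semisimple Lie algebra (the bracket restricted to S is antisymmetric and S is semisimple as a Lie algebra) such that A = S ⊕ R as a direct sum of vector spaces. -/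
/-- Derived series of a subspace `I` (computed inside the ambient algebra):
`derSeriesIn br I 0 = I`, `derSeriesIn br I (n+1) = [derSeriesIn br I n, derSeriesIn br I n]`.
A subalgebra/ideal `I` is solvable iff some term vanishes. -/
def derSeriesIn {K A : Type*} [Field K] [AddCommGroup A] [Module K A]
    (br : A →ₗ[K] A →ₗ[K] A) (I : Submodule K A) : ℕ → Submodule K A
  | 0 => I
  | n + 1 => bracketSpan br (derSeriesIn br I n) (derSeriesIn br I n)

/-!
The left multiplications of a left Leibniz algebra `A` form a Lie algebra `G`, and by the Leibniz
identity `A` is a `G`-module for which `A → G`, `a ↦ [a, ·]`, is equivariant. Elements of the kernel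
of this map multiply to zero from the left, so the radical of `A` is the preimage of the radical of
`G`, that is, the kernel of the projection from `A` onto the semisimple Lie algebra `L = G / rad G`.
Levi's theorem for Lie algebras provides a section `L → G`, through which `L` acts on `A`; by Weyl's
theorem the equivariant surjection `A → G` splits over `L`. The composite `L → G → A` carries the
bracket of `L` to that of `A`, and its image is the Levi complement.

Both classical theorems come from one fact: if `L` is semisimple, a nonzero `L`-invariant functional
on a finite-dimensional `L`-module does not vanish on all invariant vectors. Levi's theorem for an
abelian kernel follows by applying it to maps `G → ker π` modulo inner derivations.
-/

open LieModule Module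

section Casimir

variable {K L M V : Type*} [Field K] [LieRing L] [LieAlgebra K L]
  [AddCommGroup M] [Module K M]

theorem sum_apply_dualBasis_of_skew {ι N : Type*} [Fintype ι] [DecidableEq ι]
    [AddCommGroup N] [Module K N] {B : LinearMap.BilinForm K M} (hB : B.Nondegenerate)
    (hsymm : B.IsSymm) {D : End K M} (hD : ∀ x y, B (D x) y = -B x (D y))
    (b : Basis ι K M) (F : M →ₗ[K] M →ₗ[K] N) :
    ∑ i, F (D (b i)) (B.dualBasis hB b i) = -∑ i, F (b i) (D (B.dualBasis hB b i)) := by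
  set b' := B.dualBasis hB b
  have expand_b : ∀ x, x = ∑ j, B x (b' j) • b j := fun x ↦ by
    conv_lhs => rw [← b.sum_repr x]
    refine Finset.sum_congr rfl fun j _ ↦ ?_
    rw [← LinearMap.BilinForm.dualBasis_dualBasis hB hsymm b,
      LinearMap.BilinForm.dualBasis_repr_apply]
  have expand_b' : ∀ x, x = ∑ j, B x (b j) • b' j := fun x ↦ by
    conv_lhs => rw [← b'.sum_repr x]
    simp only [b', LinearMap.BilinForm.dualBasis_repr_apply]
  calc ∑ i, F (D (b i)) (b' i)
      = ∑ i, ∑ j, B (D (b i)) (b' j) • F (b j) (b' i) := by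
        refine Finset.sum_congr rfl fun i _ ↦ ?_
        conv_lhs => rw [expand_b (D (b i))]
        simp only [map_sum, map_smul, LinearMap.sum_apply, LinearMap.smul_apply]
    _ = ∑ j, ∑ i, -(B (D (b' j)) (b i) • F (b j) (b' i)) := by
        rw [Finset.sum_comm]
        refine Finset.sum_congr rfl fun j _ ↦ Finset.sum_congr rfl fun i _ ↦ ?_
        rw [hD, hsymm.eq (b i), neg_smul]
    _ = -∑ j, F (b j) (D (b' j)) := by
        rw [← Finset.sum_neg_distrib]
        refine Finset.sum_congr rfl fun j _ ↦ ?_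
        conv_rhs => rw [expand_b' (D (b' j))]
        simp only [map_sum, map_smul, Finset.sum_neg_distrib]

variable [FiniteDimensional K M] [AddCommGroup V] [Module K V]

/-- The Casimir operator `∑ φ (eᵢ) φ (eⁱ)` of `φ : M → End V` with respect to a nondegenerate form
`B` on `M`, where `eᵢ` and `eⁱ` are `B`-dual bases. -/
noncomputable def casimirOperator (B : LinearMap.BilinForm K M) (hB : B.Nondegenerate)
    (φ : M →ₗ[K] End K V) : End K V :=
  ∑ i, φ (finBasis K M i) * φ (B.dualBasis hB (finBasis K M) i)

variable {B : LinearMap.BilinForm K M} (hB : B.Nondegenerate)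

theorem trace_casimirOperator {φ : M →ₗ[K] End K V}
    (hφ : ∀ m n, LinearMap.trace K V (φ m * φ n) = B m n) :
    LinearMap.trace K V (casimirOperator B hB φ) = finrank K M := by
  simp [casimirOperator, LinearMap.trace_mul_comm K (φ (finBasis K M _)), hφ,
    LinearMap.BilinForm.apply_dualBasis_left]

variable [LieRingModule L M] [LieModule K L M] [LieRingModule L V] [LieModule K L V]

theorem commute_casimirOperator_toEnd (hsymm : B.IsSymm) (hinv : B.lieInvariant L)
    (φ : M →ₗ⁅K,L⁆ End K V) (x : L) :
    Commute (casimirOperator B hB φ) (toEnd K L V x) := by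
  set X := toEnd K L V x
  have hφ : ∀ m, X * φ m = φ m * X + φ ⁅x, m⁆ := fun m ↦ by
    ext v
    simp [X, LieHom.lie_apply]
  have hφφ : ∀ m n, X * (φ m * φ n) =
      φ m * φ n * X + (φ ⁅x, m⁆ * φ n + φ m * φ ⁅x, n⁆) := fun m n ↦ by
    rw [← mul_assoc, hφ, add_mul, mul_assoc, hφ]
    noncomm_ring
  have cancel : ∑ i, φ ⁅x, finBasis K M i⁆ * φ (B.dualBasis hB (finBasis K M) i) =
      -∑ i, φ (finBasis K M i) * φ ⁅x, B.dualBasis hB (finBasis K M) i⁆ :=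
    sum_apply_dualBasis_of_skew hB hsymm (D := toEnd K L M x) (hinv x) (finBasis K M)
      ((LinearMap.mul K (End K V)).compl₁₂ (φ : M →ₗ[K] End K V) (φ : M →ₗ[K] End K V))
  symm
  simp only [Commute, SemiconjBy, casimirOperator, Finset.mul_sum, Finset.sum_mul,
    LieModuleHom.coe_toLinearMap, hφφ, Finset.sum_add_distrib, cancel, neg_add_cancel, add_zero]

theorem apply_casimirOperator_eq_zero {φ : M →ₗ[K] End K V} {l : V →ₗ[K] K}
    (hl : ∀ m v, l (φ m v) = 0) (v : V) : l (casimirOperator B hB φ v) = 0 := by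
  simp [casimirOperator, hl]

end Casimir

section Perfect

variable {R L V : Type*} [CommRing R] [LieRing L] [LieAlgebra R L]
  [AddCommGroup V] [Module R V] [LieRingModule L V] [LieModule R L V]

theorem isTrivial_of_isNilpotent_of_derivedSeries_one_eq_top [LieModule.IsNilpotent L V]
    (hL : LieAlgebra.derivedSeries R L 1 = ⊤) : LieModule.IsTrivial L V := by
  have one_le_two : lowerCentralSeries R L V 1 ≤ lowerCentralSeries R L V 2 := by
    set N := lowerCentralSeries R L V 2
    have le_idealizer : (⊤ : LieIdeal R L) ≤ N.idealizer := by
      rw [← hL, LieAlgebra.derivedSeries_def, LieAlgebra.derivedSeriesOfIdeal_succ,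
        LieSubmodule.lie_le_iff]
      intro x _ y _
      rw [LieSubmodule.mem_idealizer]
      intro v
      have mem_N : ∀ z w : L, ⁅z, ⁅w, v⁆⁆ ∈ N := fun z w ↦
        LieSubmodule.lie_mem_lie (LieSubmodule.mem_top z)
          (LieSubmodule.lie_mem_lie (LieSubmodule.mem_top w) (LieSubmodule.mem_top v))
      rw [lie_lie]
      exact sub_mem (mem_N x y) (mem_N y x)
    exact (LieSubmodule.lie_le_iff _ _ _).2 fun x hx v _ ↦
      (LieSubmodule.mem_idealizer N).1 (le_idealizer hx) v
  have stable : ∀ k, lowerCentralSeries R L V 1 ≤ lowerCentralSeries R L V (k + 1) := by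
    intro k
    induction k with
    | zero => exact le_rfl
    | succ k ih =>
      refine one_le_two.trans ?_
      rw [lowerCentralSeries_succ R L V 1, lowerCentralSeries_succ R L V (k + 1)]
      exact LieSubmodule.mono_lie_right ⊤ ih
  obtain ⟨k, hk⟩ := LieModule.IsNilpotent.nilpotent R L V
  rw [trivial_iff_lower_central_eq_bot (R := R), eq_bot_iff, ← hk]
  exact (stable k).trans (antitone_lowerCentralSeries R L V k.le_succ)

end Perfect

section Killing

variable {K L V : Type*} [Field K] [LieRing L] [LieAlgebra K L]

theorem derivedSeries_one_eq_top_of_isKilling [FiniteDimensional K L]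
    [LieAlgebra.IsKilling K L] : LieAlgebra.derivedSeries K L 1 = ⊤ := by
  set D := LieAlgebra.derivedSeries K L 1
  have hD : IsCompl D D.killingCompl := D.isCompl_killingCompl
  have : IsLieAbelian D.killingCompl := by
    rw [LieSubmodule.lie_abelian_iff_lie_self_eq_bot, eq_bot_iff, ← hD.inf_eq_bot]
    exact le_inf (LieSubmodule.mono_lie le_top le_top) (LieSubmodule.lie_le_left _ _)
  rw [LieAlgebra.IsKilling.ideal_eq_bot_of_isLieAbelian D.killingCompl] at hD
  exact eq_top_of_isCompl_bot hD

variable [AddCommGroup V] [Module K V] [LieRingModule L V] [LieModule K L V]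

theorem isTrivial_of_traceForm_eq_zero [CharZero K] [FiniteDimensional K V]
    (hL : LieAlgebra.derivedSeries K L 1 = ⊤) (h : traceForm K L V = 0) :
    LieModule.IsTrivial L V := by
  have : LieModule.IsNilpotent (LieAlgebra.derivedSeries K L 1) V :=
    isNilpotent_derivedSeries_of_traceForm_eq_zero h
  have : LieModule.IsNilpotent L V := by
    rw [isNilpotent_iff_forall' (R := K)] at this ⊢
    exact fun x ↦ this ⟨x, hL ▸ LieSubmodule.mem_top x⟩
  exact isTrivial_of_isNilpotent_of_derivedSeries_one_eq_top hL

variable [CharZero K] [FiniteDimensional K L] [FiniteDimensional K V]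
  [LieAlgebra.IsKilling K L]

attribute [local instance] LieRing.ofAssociativeRing

open LieAlgebra.InvariantForm in
theorem exists_lieIdeal_restrict_traceForm_nondegenerate (h : ¬ LieModule.IsTrivial L V) :
    ∃ J : LieIdeal K L, J ≠ ⊥ ∧ ((traceForm K L V).restrict J.toSubmodule).Nondegenerate := by
  set I : LieIdeal K L := orthogonal (traceForm K L V) (traceForm_lieInvariant K L V) ⊤
  have hI : IsCompl I I.killingCompl := I.isCompl_killingCompl
  have hker : I.toSubmodule = LinearMap.ker (traceForm K L V) := by
    ext x
    simp [I, LinearMap.ext_iff, traceForm_comm K L V x]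
  refine ⟨I.killingCompl, fun hJ ↦ h ?_, ?_⟩
  · rw [hJ] at hI
    rw [eq_top_of_isCompl_bot hI, LieSubmodule.top_toSubmodule, eq_comm, LinearMap.ker_eq_top]
      at hker
    exact isTrivial_of_traceForm_eq_zero (derivedSeries_one_eq_top_of_isKilling (K := K)) hker
  · refine LinearMap.IsSymm.nondegenerate_restrict_of_isCompl_ker (traceForm_isSymm K L V) ?_
    rw [← hker, LieSubmodule.isCompl_toSubmodule]
    exact hI.symm

theorem exists_commute_toEnd_not_isNilpotent (h : ¬ LieModule.IsTrivial L V) :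
    ∃ Ω : End K V, (∀ x, Commute Ω (toEnd K L V x)) ∧ ¬ IsNilpotent Ω ∧
      ∀ l : V →ₗ[K] K, (∀ (x : L) v, l ⁅x, v⁆ = 0) → ∀ v, l (Ω v) = 0 := by
  obtain ⟨J, hJ, hJB⟩ := exists_lieIdeal_restrict_traceForm_nondegenerate (K := K) h
  let B : LinearMap.BilinForm K J := (traceForm K L V).restrict J.toSubmodule
  let φ : J →ₗ⁅K,L⁆ End K V :=
    { (toEnd K L V : L →ₗ[K] End K V) ∘ₗ J.toSubmodule.subtype with
      map_lie' := fun {x m} ↦ (toEnd K L V).map_lie x m }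
  have hB : B.Nondegenerate := hJB
  have hsymm : B.IsSymm := ⟨fun x y ↦ traceForm_comm K L V x y⟩
  have hinv : B.lieInvariant L := fun x y z ↦ traceForm_lieInvariant K L V x y z
  have trace_Ω : LinearMap.trace K V (casimirOperator B hB φ) = finrank K J :=
    trace_casimirOperator hB fun m n ↦ rfl
  refine ⟨casimirOperator B hB φ, fun x ↦ ?_, fun hnil ↦ ?_, fun l hl v ↦ ?_⟩
  · exact commute_casimirOperator_toEnd hB hsymm hinv φ x
  · have hJ0 : finrank K J = 0 := by
      simpa [trace_Ω] using LinearMap.isNilpotent_trace_of_isNilpotent hnil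
    exact hJ ((LieSubmodule.toSubmodule_eq_bot J).1 (Submodule.finrank_eq_zero.1 hJ0))
  · exact apply_casimirOperator_eq_zero hB (fun m v ↦ hl m v) v

end Killing

theorem exists_lieHom_comp_eq {R G H L : Type*} [CommRing R] [LieRing G] [LieAlgebra R G]
    [LieRing H] [LieAlgebra R H] [LieRing L] [LieAlgebra R L] {p : G →ₗ⁅R⁆ L}
    (hp : Function.Surjective p) {f : G →ₗ⁅R⁆ H} (hf : p.ker ≤ f.ker) :
    ∃ g : L →ₗ⁅R⁆ H, g.comp p = f := by
  have f_eq : ∀ {x y}, p x = p y → f x = f y := fun {x y} h ↦ by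
    rw [← sub_eq_zero, ← map_sub]
    exact hf (LieHom.mem_ker.2 (by rw [map_sub, h, sub_self]))
  choose s hs using hp
  refine ⟨{ toFun := fun y ↦ f (s y), map_add' := fun x y ↦ ?_, map_smul' := fun c x ↦ ?_,
            map_lie' := fun {x y} ↦ ?_ }, LieHom.ext fun x ↦ f_eq (hs _)⟩
  · rw [← map_add]; exact f_eq (by simp only [hs, map_add])
  · rw [RingHom.id_apply, ← map_smul]; exact f_eq (by simp only [hs, map_smul])
  · rw [← LieHom.map_lie]; exact f_eq (by simp only [hs, LieHom.map_lie])

section Weyl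

variable {K L : Type*} [Field K] [CharZero K] [LieRing L] [LieAlgebra K L]
  [FiniteDimensional K L] [LieAlgebra.IsKilling K L]

attribute [local instance] LieRing.ofAssociativeRing

theorem exists_mem_maxTrivSubmodule_apply_ne_zero_of_isKilling {V : Type*} [AddCommGroup V]
    [Module K V] [FiniteDimensional K V] [LieRingModule L V] [LieModule K L V]
    (l : V →ₗ[K] K) (hl : ∀ (x : L) v, l ⁅x, v⁆ = 0) (hl0 : l ≠ 0) :
    ∃ v ∈ maxTrivSubmodule K L V, l v ≠ 0 := by
  induction hn : finrank K V using Nat.strong_induction_on generalizing V with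
  | _ n ih =>
  by_cases htriv : LieModule.IsTrivial L V
  · obtain ⟨v, hv⟩ := DFunLike.ne_iff.1 hl0
    exact ⟨v, fun x ↦ trivial_lie_zero L V x v, hv⟩
  -- `l` vanishes on the image of `Ω`, hence not on its Fitting null component `N`, and `N ≠ ⊤`.
  obtain ⟨Ω, hΩ, hΩnil, hlΩ⟩ := exists_commute_toEnd_not_isNilpotent (K := K) htriv
  obtain ⟨k, hk, hk0⟩ := (Ω.eventually_isCompl_ker_pow_range_pow.and
    (Filter.eventually_ge_atTop 1)).exists
  let N : LieSubmodule K L V :=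
    { LinearMap.ker (Ω ^ k) with
      lie_mem := fun {x v} (hv : (Ω ^ k) v = 0) ↦ by
        have := LinearMap.congr_fun ((hΩ x).pow_left k) v
        simp only [Module.End.mul_apply, toEnd_apply_apply, hv, lie_zero] at this
        exact this }
  have hlN : l ∘ₗ N.toSubmodule.subtype ≠ 0 := fun h ↦ hl0 <| by
    refine LinearMap.ext_on_codisjoint hk.codisjoint (fun v hv ↦ LinearMap.congr_fun h ⟨v, hv⟩) ?_
    rintro _ ⟨v, rfl⟩
    obtain ⟨j, rfl⟩ := Nat.exists_eq_add_of_le' hk0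
    rw [pow_succ', Module.End.mul_apply, hlΩ l hl, LinearMap.zero_apply]
  have hN : finrank K N < finrank K V := Submodule.finrank_lt fun h ↦
    hΩnil ⟨k, LinearMap.ker_eq_top.1 h⟩
  obtain ⟨v, hv, hlv⟩ := ih _ (hn ▸ hN) (V := N) _ (fun x v ↦ hl x v) hlN rfl
  exact ⟨v, fun x ↦ congr_arg Subtype.val (hv x), hlv⟩

section

variable {G V W : Type*} [LieRing G] [LieAlgebra K G]
  [AddCommGroup V] [Module K V] [FiniteDimensional K V] [LieRingModule G V] [LieModule K G V]
  [AddCommGroup W] [Module K W] [LieRingModule G W] [LieModule K G W]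
  {p : G →ₗ⁅K⁆ L} (hp : Function.Surjective p)
include hp

theorem exists_mem_maxTrivSubmodule_apply_ne_zero
    (hV : ∀ r ∈ p.ker, ∀ v : V, ⁅r, v⁆ = 0) (l : V →ₗ[K] K)
    (hl : ∀ (x : G) v, l ⁅x, v⁆ = 0) (hl0 : l ≠ 0) :
    ∃ v ∈ maxTrivSubmodule K G V, l v ≠ 0 := by
  obtain ⟨ρ, hρ⟩ : ∃ ρ : L →ₗ⁅K⁆ End K V, ρ.comp p = toEnd K G V :=
    exists_lieHom_comp_eq hp fun r hr ↦ LinearMap.ext (hV r hr)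
  let _ : LieRingModule L V := LieRingModule.compLieHom V ρ
  have _ : LieModule K L V := LieModule.compLieHom V ρ
  have lie_eq : ∀ (x : G) (v : V), ⁅p x, v⁆ = ⁅x, v⁆ := fun x v ↦
    LinearMap.congr_fun (LieHom.congr_fun hρ x) v
  obtain ⟨v, hv, hlv⟩ := exists_mem_maxTrivSubmodule_apply_ne_zero_of_isKilling (L := L) l
    (hp.forall.2 fun x v ↦ by rw [lie_eq, hl]) hl0
  exact ⟨v, fun x ↦ by rw [← lie_eq, hv], hlv⟩

theorem exists_mem_maxTrivSubmodule_map_eq (f : V →ₗ⁅K,G⁆ W) {w : W}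
    (hw : w ∈ maxTrivSubmodule K G W) (hwf : w ∈ f.range)
    (hV : ∀ r ∈ p.ker, ∀ v : V, f v ∈ K ∙ w → ⁅r, v⁆ = 0) :
    ∃ v ∈ maxTrivSubmodule K G V, f v = w := by
  obtain rfl | hw0 := eq_or_ne w 0
  · exact ⟨0, zero_mem _, map_zero f⟩
  -- A functional on `W` that does not vanish at `w` becomes invariant on the preimage of `K ∙ w`.
  obtain ⟨ℓ, hℓ⟩ : ∃ ℓ : W →ₗ[K] K, ℓ w ≠ 0 := by
    simpa using mt (Module.forall_dual_apply_eq_zero_iff K w).1 hw0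
  have f_lie : ∀ (x : G) v, f v ∈ K ∙ w → f ⁅x, v⁆ = 0 := fun x v hv ↦ by
    obtain ⟨c, hc⟩ := Submodule.mem_span_singleton.1 hv
    rw [f.map_lie, ← hc, lie_smul, hw x, smul_zero]
  let N : LieSubmodule K G V :=
    { (K ∙ w).comap (f : V →ₗ[K] W) with
      lie_mem := fun {x v} hv ↦ Submodule.mem_comap.2 <| by
        rw [LieModuleHom.coe_toLinearMap, f_lie x v hv]
        exact zero_mem _ }
  obtain ⟨v₀, hv₀⟩ : ∃ v₀ : N, f v₀ = w := by
    obtain ⟨v₀, rfl⟩ := hwf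
    exact ⟨⟨v₀, Submodule.mem_span_singleton_self _⟩, rfl⟩
  obtain ⟨v, hv, hlv⟩ := exists_mem_maxTrivSubmodule_apply_ne_zero hp (V := N)
    (fun r hr v ↦ Subtype.ext (hV r hr v v.2)) (ℓ ∘ₗ (f : V →ₗ[K] W) ∘ₗ N.toSubmodule.subtype)
    (fun x v ↦ (congr_arg ℓ (f_lie x v v.2)).trans ℓ.map_zero)
    (fun h ↦ hℓ ((congr_arg ℓ hv₀).symm.trans (LinearMap.congr_fun h v₀)))
  obtain ⟨c, hc⟩ := Submodule.mem_span_singleton.1 v.2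
  have hc0 : c ≠ 0 := by
    rintro rfl
    exact hlv ((congr_arg ℓ hc).symm.trans (by simp))
  refine ⟨c⁻¹ • (v : V), Submodule.smul_mem _ _ fun x ↦ congr_arg Subtype.val (hv x), ?_⟩
  rw [map_smul, inv_smul_eq_iff₀ hc0]
  exact hc.symm

theorem exists_lieModuleHom_comp_eq_id (hV : ∀ r ∈ p.ker, ∀ v : V, ⁅r, v⁆ = 0)
    {f : V →ₗ⁅K,G⁆ W} (hf : Function.Surjective f) :
    ∃ g : W →ₗ⁅K,G⁆ V, f.comp g = LieModuleHom.id := by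
  have : FiniteDimensional K W := Module.Finite.of_surjective (f : V →ₗ[K] W) hf
  have hW : ∀ r ∈ p.ker, ∀ w : W, ⁅r, w⁆ = 0 := fun r hr ↦
    hf.forall.2 fun v ↦ by rw [← f.map_lie, hV r hr, map_zero]
  let F : (W →ₗ[K] V) →ₗ⁅K,G⁆ (W →ₗ[K] W) :=
    { (f : V →ₗ[K] W).compRight K with
      map_lie' := fun {x φ} ↦ LinearMap.ext fun w ↦ by simp [LieHom.lie_apply] }
  obtain ⟨g₀, hg₀⟩ := (f : V →ₗ[K] W).exists_rightInverse_of_surjective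
    (LinearMap.range_eq_top.2 hf)
  obtain ⟨g, hg, hfg⟩ := exists_mem_maxTrivSubmodule_map_eq hp F (w := LinearMap.id)
    (fun x ↦ LinearMap.ext fun w ↦ by simp [LieHom.lie_apply]) ⟨g₀, hg₀⟩
    (fun r hr φ _ ↦ LinearMap.ext fun w ↦ by simp [LieHom.lie_apply, hV r hr, hW r hr])
  exact ⟨maxTrivLinearMapEquivLieModuleHom ⟨g, hg⟩,
    LieModuleHom.ext fun w ↦ LinearMap.congr_fun hfg w⟩

end

variable {G : Type*} [LieRing G] [LieAlgebra K G] [FiniteDimensional K G]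
  {π : G →ₗ⁅K⁆ L} (hπ : Function.Surjective π)
include hπ

theorem exists_lieHom_section_of_ker_le_center (hc : π.ker ≤ LieAlgebra.center K G) :
    ∃ s : L →ₗ⁅K⁆ G, π.comp s = LieHom.id := by
  let _ : LieRingModule G L := LieRingModule.compLieHom L π
  have _ : LieModule K G L := LieModule.compLieHom L π
  let f : G →ₗ⁅K,G⁆ L := { (π : G →ₗ[K] L) with map_lie' := fun {x y} ↦ π.map_lie x y }
  have central : ∀ r ∈ π.ker, ∀ x : G, ⁅r, x⁆ = 0 := fun r hr x ↦ by
    rw [← lie_skew, hc hr x, neg_zero]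
  obtain ⟨g, hg⟩ := exists_lieModuleHom_comp_eq_id hπ central (f := f) hπ
  have πg : ∀ y, π (g y) = y := fun y ↦ LieModuleHom.congr_fun hg y
  refine ⟨{ (g : L →ₗ[K] G) with map_lie' := fun {x y} ↦ ?_ }, LieHom.ext πg⟩
  have g_lie : g ⁅π (g x), y⁆ = ⁅g x, g y⁆ := g.map_lie (g x) y
  rwa [πg] at g_lie

end Weyl

section Solvable

variable {R G H : Type*} [CommRing R] [LieRing G] [LieAlgebra R G] [LieRing H] [LieAlgebra R H]

theorem eq_bot_of_le_lie_self {I : LieIdeal R G} [LieAlgebra.IsSolvable I] (hI : I ≤ ⁅I, I⁆) :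
    I = ⊥ := by
  obtain ⟨k, hk⟩ := LieAlgebra.IsSolvable.solvable R I
  rw [LieIdeal.derivedSeries_eq_bot_iff] at hk
  have I_le : ∀ n, I ≤ LieAlgebra.derivedSeriesOfIdeal R G n I := by
    intro n
    induction n with
    | zero => exact le_rfl
    | succ n ih =>
      rw [LieAlgebra.derivedSeriesOfIdeal_succ]
      exact hI.trans (LieSubmodule.mono_lie ih ih)
  exact eq_bot_iff.2 (hk ▸ I_le k)

theorem derivedSeriesOfIdeal_comap_le (f : G →ₗ⁅R⁆ H) (I : LieIdeal R H) (k : ℕ) :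
    LieAlgebra.derivedSeriesOfIdeal R G k (I.comap f) ≤
      (LieAlgebra.derivedSeriesOfIdeal R H k I).comap f := by
  induction k with
  | zero => exact le_rfl
  | succ k ih =>
    rw [LieAlgebra.derivedSeriesOfIdeal_succ, LieAlgebra.derivedSeriesOfIdeal_succ]
    exact (LieSubmodule.mono_lie ih ih).trans (LieIdeal.comap_bracket_le f)

theorem isSolvable_comap (f : G →ₗ⁅R⁆ H) (I : LieIdeal R H) [LieAlgebra.IsSolvable f.ker]
    [LieAlgebra.IsSolvable I] : LieAlgebra.IsSolvable (I.comap f) := by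
  obtain ⟨k, hk⟩ := LieAlgebra.IsSolvable.solvable R I
  obtain ⟨l, hl⟩ := LieAlgebra.IsSolvable.solvable R f.ker
  rw [LieIdeal.derivedSeries_eq_bot_iff] at hk hl
  refine LieAlgebra.IsSolvable.mk (R := R) (k := l + k) ?_
  rw [LieIdeal.derivedSeries_eq_bot_iff, eq_bot_iff, LieAlgebra.derivedSeriesOfIdeal_add, ← hl]
  refine LieAlgebra.derivedSeriesOfIdeal_mono ?_ l
  have h := derivedSeriesOfIdeal_comap_le f I k
  rwa [hk] at h

end Solvable

section Quotient

variable {R G : Type*} [CommRing R] [LieRing G] [LieAlgebra R G]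

/-- The projection onto `G ⧸ J` as a homomorphism of Lie algebras; `LieSubmodule.Quotient.mk'` is
only a homomorphism of `G`-modules. -/
def quotientLieHom (J : LieIdeal R G) : G →ₗ⁅R⁆ G ⧸ J :=
  { (LieSubmodule.Quotient.mk' J : G →ₗ[R] G ⧸ J) with map_lie' := rfl }

theorem ker_quotientLieHom (J : LieIdeal R G) : (quotientLieHom J).ker = J :=
  LieSubmodule.ext _ _ fun _ ↦ LieSubmodule.Quotient.mk_eq_zero'

variable [IsNoetherian R G]

theorem isSolvable_ker_quotientLieHom_radical :
    LieAlgebra.IsSolvable (quotientLieHom (LieAlgebra.radical R G)).ker := by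
  rw [ker_quotientLieHom]
  infer_instance

theorem hasTrivialRadical_quotient_radical :
    LieAlgebra.HasTrivialRadical R (G ⧸ LieAlgebra.radical R G) := by
  set π := quotientLieHom (LieAlgebra.radical R G)
  have hker : π.ker = LieAlgebra.radical R G := ker_quotientLieHom _
  have : LieAlgebra.IsSolvable π.ker := isSolvable_ker_quotientLieHom_radical
  set J := LieAlgebra.radical R (G ⧸ LieAlgebra.radical R G)
  have J_le : J.comap π ≤ π.ker := by
    rw [hker, ← LieAlgebra.LieIdeal.solvable_iff_le_radical]
    exact isSolvable_comap π J
  refine ⟨eq_bot_iff.2 fun y hy ↦ ?_⟩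
  obtain ⟨x, rfl⟩ := LieSubmodule.Quotient.surjective_mk' (LieAlgebra.radical R G) y
  exact J_le hy

end Quotient

section InnerDerivation

variable {K G : Type*} [CommRing K] [LieRing G] [LieAlgebra K G]

/-- For an ideal `R` of `G`, the equivariant map sending `r : R` to the inner derivation
`g ↦ ⁅g, r⁆` from `G` to `R`. -/
def innerDerivationHom (R : LieIdeal K G) : R →ₗ⁅K,G⁆ (G →ₗ[K] R) :=
  { (toEnd K G R : G →ₗ[K] End K R).flip with
    map_lie' := fun {x r} ↦ LinearMap.ext fun g ↦ by simp [LieHom.lie_apply] }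

theorem innerDerivationHom_apply (R : LieIdeal K G) (r : R) (g : G) :
    innerDerivationHom R r g = ⁅g, r⁆ := rfl

theorem lie_eq_smul_innerDerivationHom {R : LieIdeal K G} [IsLieAbelian R] {φ : G →ₗ[K] R}
    {c : K} (hφ : ∀ r : R, φ r = c • r) (r : R) : ⁅(r : G), φ⁆ = c • innerDerivationHom R r := by
  ext1 g
  have lie_φ : ⁅(r : G), φ g⁆ = 0 := trivial_lie_zero R R r (φ g)
  have φ_lie : φ ⁅(r : G), g⁆ = -(c • ⁅g, r⁆) := by
    rw [← lie_skew, map_neg]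
    exact congr_arg Neg.neg (hφ ⁅g, r⁆)
  rw [LieHom.lie_apply, lie_φ, φ_lie, zero_sub, neg_neg, LinearMap.smul_apply,
    innerDerivationHom_apply]

end InnerDerivation

section Levi

variable {K L G : Type*} [Field K] [CharZero K] [LieRing L] [LieAlgebra K L]
  [FiniteDimensional K L] [LieAlgebra.IsKilling K L] [LieRing G] [LieAlgebra K G]
  [FiniteDimensional K G] {π : G →ₗ⁅K⁆ L} (hπ : Function.Surjective π)
include hπ

theorem exists_projection_lie_mem_range_innerDerivationHom {R : LieIdeal K G} [IsLieAbelian R]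
    (hR : π.ker ≤ R) :
    ∃ φ : G →ₗ[K] R, (∀ r : R, φ r = r) ∧ ∀ x : G, ⁅x, φ⁆ ∈ (innerDerivationHom R).range := by
  -- The ideal `R` acts on the maps that are scalar on `R` by inner derivations, so `π.ker` acts
  -- trivially on them modulo `P` and the obstruction is one for modules over `L`.
  let P := (innerDerivationHom R).range
  let F : ((G →ₗ[K] R) ⧸ P) →ₗ⁅K,G⁆ (R →ₗ[K] R) :=
    { P.toSubmodule.liftQ (LinearMap.lcomp K R R.toSubmodule.subtype) (by
        rintro _ ⟨r, rfl⟩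
        exact LinearMap.ext fun r' ↦ trivial_lie_zero R R r' r) with
      map_lie' := fun {x q} ↦ by
        obtain ⟨φ, rfl⟩ := LieSubmodule.Quotient.surjective_mk' P q
        rfl }
  obtain ⟨φ₀, hφ₀⟩ := R.toSubmodule.subtype.exists_leftInverse_of_injective
    (Submodule.ker_subtype _)
  obtain ⟨q, hq, hFq⟩ := exists_mem_maxTrivSubmodule_map_eq hπ F (w := LinearMap.id)
    (fun x ↦ LinearMap.ext fun r ↦ by simp [LieHom.lie_apply]) ⟨Submodule.Quotient.mk φ₀, hφ₀⟩
    (fun r hr q hq ↦ by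
      obtain ⟨φ, rfl⟩ := LieSubmodule.Quotient.surjective_mk' P q
      obtain ⟨c, hc⟩ := Submodule.mem_span_singleton.1 hq
      have hφ : ∀ r' : R, φ r' = c • r' := fun r' ↦ (LinearMap.congr_fun hc r').symm
      have lie_φ : ⁅r, φ⁆ = c • innerDerivationHom R ⟨r, hR hr⟩ :=
        lie_eq_smul_innerDerivationHom hφ ⟨r, hR hr⟩
      rw [← LieModuleHom.map_lie, LieSubmodule.Quotient.mk_eq_zero, lie_φ]
      exact P.smul_mem c ⟨_, rfl⟩)
  obtain ⟨φ, rfl⟩ := LieSubmodule.Quotient.surjective_mk' P q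
  refine ⟨φ, fun r ↦ LinearMap.congr_fun hFq r, fun x ↦ ?_⟩
  rw [← LieSubmodule.Quotient.mk_eq_zero, LieModuleHom.map_lie]
  exact hq x

theorem exists_lieHom_section_of_isLieAbelian_ker [IsLieAbelian π.ker] :
    ∃ s : L →ₗ⁅K⁆ G, π.comp s = LieHom.id := by
  obtain ⟨φ, hφ, hφP⟩ := exists_projection_lie_mem_range_innerDerivationHom hπ le_rfl
  have lie_φ : ∀ r : π.ker, ⁅(r : G), φ⁆ = innerDerivationHom π.ker r := fun r ↦
    (lie_eq_smul_innerDerivationHom (c := 1) (by simpa using hφ) r).trans (one_smul K _)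
  -- The stabiliser of a projection `φ` onto `π.ker` meets `π.ker` in central elements only.
  let N : LieSubalgebra K G :=
    { carrier := {x | ⁅x, φ⁆ = 0}
      add_mem' := fun hx hy ↦ by simp_all [add_lie]
      zero_mem' := zero_lie φ
      smul_mem' := fun c x hx ↦ by simp_all
      lie_mem' := fun hx hy ↦ by simp_all [lie_lie] }
  have surj : Function.Surjective (π.comp N.incl) := fun y ↦ by
    obtain ⟨x, rfl⟩ := hπ y
    obtain ⟨r, hr⟩ := hφP x
    have hxr : ⁅x - (r : G), φ⁆ = 0 := by rw [sub_lie, lie_φ, ← hr]; exact sub_self _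
    refine ⟨⟨x - r, hxr⟩, ?_⟩
    simpa [sub_eq_self] using LieHom.mem_ker.1 r.2
  have central : (π.comp N.incl).ker ≤ LieAlgebra.center K N := fun r hr x ↦ by
    have lie_r : ⁅(x : G), (⟨r, hr⟩ : π.ker)⁆ = 0 := by
      rw [← innerDerivationHom_apply, ← lie_φ]
      exact LinearMap.congr_fun r.2 (x : G)
    exact Subtype.ext (congr_arg (fun z : π.ker ↦ (z : G)) lie_r)
  obtain ⟨s, hs⟩ := exists_lieHom_section_of_ker_le_center surj central
  exact ⟨N.incl.comp s, hs⟩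

theorem exists_lieSubalgebra_surjective_inf_ker_le :
    ∃ B : LieSubalgebra K G, Function.Surjective (π.comp B.incl) ∧
      ∀ b ∈ B, π b = 0 → b ∈ ⁅π.ker, π.ker⁆ := by
  set J : LieIdeal K G := ⁅π.ker, π.ker⁆
  have mkJ_surj : Function.Surjective (quotientLieHom J) := LieSubmodule.Quotient.surjective_mk' J
  obtain ⟨π', hπ'⟩ : ∃ π' : G ⧸ J →ₗ⁅K⁆ L, π'.comp (quotientLieHom J) = π :=
    exists_lieHom_comp_eq mkJ_surj <| by
      rw [ker_quotientLieHom]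
      exact LieSubmodule.lie_le_left _ _
  have π'_mk : ∀ x, π' (quotientLieHom J x) = π x := LieHom.congr_fun hπ'
  have π'_surj : Function.Surjective π' := fun y ↦ (hπ y).imp' _ fun x hx ↦ (π'_mk x).trans hx
  have : IsLieAbelian π'.ker := by
    rw [LieSubmodule.lie_abelian_iff_lie_self_eq_bot, LieSubmodule.lie_eq_bot_iff]
    refine mkJ_surj.forall.2 fun x hx ↦ mkJ_surj.forall.2 fun y hy ↦ ?_
    rw [LieHom.mem_ker, π'_mk] at hx hy
    rw [← LieHom.map_lie, ← LieHom.mem_ker, ker_quotientLieHom]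
    exact LieSubmodule.lie_mem_lie hx hy
  obtain ⟨s, hs⟩ := exists_lieHom_section_of_isLieAbelian_ker π'_surj
  have π's : ∀ y, π' (s y) = y := LieHom.congr_fun hs
  refine ⟨s.range.comap (quotientLieHom J), fun y ↦ ?_, fun b hb hb0 ↦ ?_⟩
  · obtain ⟨x, hx⟩ := mkJ_surj (s y)
    have hxy : π x = y := by rw [← π'_mk, hx, π's]
    exact ⟨⟨x, y, hx.symm⟩, hxy⟩
  · obtain ⟨y, hy⟩ := hb
    have hy' : s y = quotientLieHom J b := hy
    have hy0 : y = 0 := by rw [← π's y, hy', π'_mk, hb0]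
    rw [← ker_quotientLieHom J, LieHom.mem_ker, ← hy', hy0, map_zero]

theorem exists_lieHom_section_of_isSolvable_ker [LieAlgebra.IsSolvable π.ker] :
    ∃ s : L →ₗ⁅K⁆ G, π.comp s = LieHom.id := by
  induction hn : finrank K G using Nat.strong_induction_on generalizing G with
  | _ n ih =>
  by_cases hker : π.ker = ⊥
  · let e : G ≃ₗ⁅K⁆ L := LieEquiv.ofBijective π ⟨(LieHom.ker_eq_bot π).1 hker, hπ⟩
    exact ⟨e.symm, LieHom.ext e.apply_symm_apply⟩
  obtain ⟨B, hB, hBker⟩ := exists_lieSubalgebra_surjective_inf_ker_le hπ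
  have B_ne_top : B.toSubmodule ≠ ⊤ := fun hB ↦ hker <| eq_bot_of_le_lie_self fun x hx ↦
    hBker x (hB ▸ Submodule.mem_top : x ∈ B.toSubmodule) hx
  have B_lt : finrank K B < finrank K G := Submodule.finrank_lt B_ne_top
  have : LieAlgebra.IsSolvable B.incl.ker :=
    (LieHom.ker_eq_bot B.incl).2 Subtype.val_injective ▸ inferInstance
  have : LieAlgebra.IsSolvable (π.comp B.incl).ker := isSolvable_comap B.incl π.ker
  obtain ⟨s, hs⟩ := ih _ (hn ▸ B_lt) hB rfl
  exact ⟨B.incl.comp s, hs⟩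

end Levi

theorem isCompl_range_ker_of_leftInverse {R M N : Type*} [Ring R] [AddCommGroup M] [Module R M]
    [AddCommGroup N] [Module R N] {f : M →ₗ[R] N} {g : N →ₗ[R] M}
    (h : Function.LeftInverse f g) : IsCompl (LinearMap.range g) (LinearMap.ker f) := by
  have hproj : LinearMap.IsProj (LinearMap.range g) (g ∘ₗ f) :=
    ⟨fun x ↦ ⟨f x, rfl⟩, by rintro _ ⟨y, rfl⟩; exact congr_arg g (h y)⟩
  simpa only [LinearMap.ker_comp_of_ker_eq_bot f (LinearMap.ker_eq_bot.2 h.injective)]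
    using hproj.isCompl

section Lift

variable {K L G A : Type*} [Field K] [CharZero K] [LieRing L] [LieAlgebra K L]
  [FiniteDimensional K L] [LieAlgebra.IsKilling K L] [LieRing G] [LieAlgebra K G]
  [AddCommGroup A] [Module K A] [FiniteDimensional K A] [LieRingModule G A] [LieModule K G A]

theorem exists_linearMap_lift_of_surjective {p : A →ₗ⁅K,G⁆ G} (hp : Function.Surjective p)
    (s : L →ₗ⁅K⁆ G) :
    ∃ t : L →ₗ[K] A, (∀ x, p (t x) = s x) ∧ ∀ x y, t ⁅x, y⁆ = ⁅s x, t y⁆ := by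
  let _ : LieRingModule L A := LieRingModule.compLieHom A s
  have _ : LieModule K L A := LieModule.compLieHom A s
  let _ : LieRingModule L G := LieRingModule.compLieHom G s
  have _ : LieModule K L G := LieModule.compLieHom G s
  let f : A →ₗ⁅K,L⁆ G := { (p : A →ₗ[K] G) with map_lie' := fun {x a} ↦ p.map_lie (s x) a }
  obtain ⟨σ, hσ⟩ := exists_lieModuleHom_comp_eq_id (p := LieHom.id) Function.surjective_id
    (fun x (hx : x = 0) a ↦ hx ▸ zero_lie a) (f := f) hp
  refine ⟨(σ : G →ₗ[K] A) ∘ₗ (s : L →ₗ[K] G), fun x ↦ LieModuleHom.congr_fun hσ (s x), fun x y ↦ ?_⟩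
  have s_lie : s ⁅x, y⁆ = ⁅x, s y⁆ := s.map_lie x y
  exact (congr_arg σ s_lie).trans (σ.map_lie x (s y))

end Lift

section Leibniz

variable {K A : Type*} [Field K] [AddCommGroup A] [Module K A] {br : A →ₗ[K] A →ₗ[K] A}

section

variable {G : Type*} [LieRing G] [LieAlgebra K G] {p : A →ₗ[K] G}
  (hp : ∀ a b, p (br a b) = ⁅p a, p b⁆)
include hp

theorem map_derSeriesIn {I : Submodule K A} {J : LieIdeal K G} (hIJ : I.map p = J.toSubmodule)
    (n : ℕ) :
    (derSeriesIn br I n).map p = (LieAlgebra.derivedSeriesOfIdeal K G n J).toSubmodule := by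
  induction n with
  | zero => exact hIJ
  | succ n ih =>
    rw [LieAlgebra.derivedSeriesOfIdeal_succ, LieSubmodule.lieIdeal_oper_eq_linear_span',
      derSeriesIn, bracketSpan, Submodule.map_span]
    congr 1
    ext z
    simp only [← LieSubmodule.mem_toSubmodule, ← ih]
    simp [hp]

theorem exists_derSeriesIn_comap_eq_bot (hsurj : Function.Surjective p)
    (hker : LinearMap.ker p ≤ LinearMap.ker br) (J : LieIdeal K G) [LieAlgebra.IsSolvable J] :
    ∃ m, derSeriesIn br (J.toSubmodule.comap p) m = ⊥ := by
  obtain ⟨k, hk⟩ := LieAlgebra.IsSolvable.solvable K J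
  rw [LieIdeal.derivedSeries_eq_bot_iff] at hk
  have h := map_derSeriesIn hp (Submodule.map_comap_eq_of_surjective hsurj J.toSubmodule) k
  rw [hk, LieSubmodule.bot_toSubmodule, ← LinearMap.le_ker_iff_map] at h
  refine ⟨k + 1, Submodule.span_eq_bot.2 ?_⟩
  rintro _ ⟨a, ha, b, -, rfl⟩
  rw [LinearMap.mem_ker.1 (hker (h ha)), LinearMap.zero_apply]

theorem le_ker_of_derSeriesIn_eq_bot [LieAlgebra.HasTrivialRadical K G]
    {S I : Submodule K A} (hS : S.map p = ⊤) (hI : ∀ s ∈ S, ∀ x ∈ I, br s x ∈ I)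
    (hsolv : ∃ m, derSeriesIn br I m = ⊥) : I ≤ LinearMap.ker p := by
  let J : LieIdeal K G :=
    { I.map p with
      lie_mem := by
        rintro y _ ⟨x, hx, rfl⟩
        obtain ⟨s, hs, rfl⟩ : y ∈ S.map p := hS ▸ Submodule.mem_top
        exact ⟨br s x, hI s hs x hx, hp s x⟩ }
  obtain ⟨m, hm⟩ := hsolv
  have : LieAlgebra.IsSolvable J := by
    refine LieAlgebra.IsSolvable.mk (R := K) (k := m) ?_
    rw [LieIdeal.derivedSeries_eq_bot_iff, ← LieSubmodule.toSubmodule_eq_bot,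
      ← map_derSeriesIn hp (I := I) rfl, hm, Submodule.map_bot]
  rw [LinearMap.le_ker_iff_map]
  exact congr_arg LieSubmodule.toSubmodule
    (LieAlgebra.HasTrivialRadical.eq_bot_of_isSolvable (R := K) J)

end

variable (leibniz : ∀ a b c : A, br a (br b c) = br (br a b) c + br b (br a c))

attribute [local instance] LieRing.ofAssociativeRing

include leibniz in
theorem leftMul_br (a b : A) : br (br a b) = ⁅br a, br b⁆ := by
  ext c
  simp [LieRing.of_associative_ring_bracket, leibniz a b c]

/-- The Lie algebra of left multiplications `br a` of a left Leibniz algebra `(A, br)`. -/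
def leftMulLieSubalgebra : LieSubalgebra K (End K A) :=
  { LinearMap.range br with
    lie_mem' := by
      rintro _ _ ⟨a, rfl⟩ ⟨b, rfl⟩
      exact ⟨br a b, leftMul_br leibniz a b⟩ }

/-- The left multiplication `a ↦ br a` as an equivariant map to the adjoint module of
`leftMulLieSubalgebra`. -/
def leftMulHom : A →ₗ⁅K,leftMulLieSubalgebra leibniz⁆ leftMulLieSubalgebra leibniz :=
  { br.codRestrict (leftMulLieSubalgebra leibniz).toSubmodule (LinearMap.mem_range_self br) with
    map_lie' := by
      rintro ⟨_, a, rfl⟩ b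
      exact Subtype.ext (leftMul_br leibniz a b) }

theorem leftMulHom_surjective : Function.Surjective (leftMulHom leibniz) := by
  rintro ⟨_, a, rfl⟩
  exact ⟨a, rfl⟩

/-- The semisimple quotient of the Lie algebra of left multiplications. -/
abbrev LeviQuotient : Type _ :=
  leftMulLieSubalgebra leibniz ⧸ LieAlgebra.radical K (leftMulLieSubalgebra leibniz)

/-- The projection of a Leibniz algebra onto its Levi quotient; for finite-dimensional `A` its
kernel is the solvable radical. -/
def leviQuotientMap : A →ₗ[K] LeviQuotient leibniz :=
  (quotientLieHom (LieAlgebra.radical K (leftMulLieSubalgebra leibniz)) : _ →ₗ[K] _) ∘ₗ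
    (leftMulHom leibniz : A →ₗ[K] leftMulLieSubalgebra leibniz)

theorem leviQuotientMap_br (a b : A) :
    leviQuotientMap leibniz (br a b) = ⁅leviQuotientMap leibniz a, leviQuotientMap leibniz b⁆ :=
  congr_arg (quotientLieHom (LieAlgebra.radical K (leftMulLieSubalgebra leibniz)))
    ((leftMulHom leibniz).map_lie (leftMulHom leibniz a) b)

theorem leviQuotientMap_surjective : Function.Surjective (leviQuotientMap leibniz) :=
  (LieSubmodule.Quotient.surjective_mk' _).comp (leftMulHom_surjective leibniz)

variable [FiniteDimensional K A]

theorem exists_derSeriesIn_ker_leviQuotientMap_eq_bot :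
    ∃ m, derSeriesIn br (LinearMap.ker (leviQuotientMap leibniz)) m = ⊥ := by
  have ker_eq : LinearMap.ker (leviQuotientMap leibniz) =
      (LieAlgebra.radical K (leftMulLieSubalgebra leibniz)).toSubmodule.comap
        (leftMulHom leibniz : A →ₗ[K] leftMulLieSubalgebra leibniz) :=
    Submodule.ext fun _ ↦ LieSubmodule.Quotient.mk_eq_zero'
  rw [ker_eq]
  exact exists_derSeriesIn_comap_eq_bot
    (fun a b ↦ (leftMulHom leibniz).map_lie (leftMulHom leibniz a) b)
    (leftMulHom_surjective leibniz) (fun _ h ↦ congr_arg Subtype.val h) _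

theorem exists_section_leviQuotientMap [CharZero K] :
    ∃ t : LeviQuotient leibniz →ₗ[K] A, (∀ x, leviQuotientMap leibniz (t x) = x) ∧
      ∀ x y, br (t x) (t y) = t ⁅x, y⁆ := by
  set π := quotientLieHom (LieAlgebra.radical K (leftMulLieSubalgebra leibniz))
  have : LieAlgebra.HasTrivialRadical K (LeviQuotient leibniz) :=
    hasTrivialRadical_quotient_radical
  have : LieAlgebra.IsSolvable π.ker := isSolvable_ker_quotientLieHom_radical
  obtain ⟨s, hs⟩ : ∃ s : LeviQuotient leibniz →ₗ⁅K⁆ leftMulLieSubalgebra leibniz,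
      π.comp s = LieHom.id :=
    exists_lieHom_section_of_isSolvable_ker (LieSubmodule.Quotient.surjective_mk' _)
  obtain ⟨t, ht, t_lie⟩ := exists_linearMap_lift_of_surjective (leftMulHom_surjective leibniz) s
  refine ⟨t, fun x ↦ (congr_arg π (ht x)).trans (LieHom.congr_fun hs x), fun x y ↦ ?_⟩
  rw [t_lie, ← ht]
  rfl

end Leibniz

theorem leibniz_levi_decomposition_general
    {K A : Type*} [Field K] [CharZero K]
    [AddCommGroup A] [Module K A] [FiniteDimensional K A]
    (br : A →ₗ[K] A →ₗ[K] A)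
    (leibniz : ∀ a b c : A, br a (br b c) = br (br a b) c + br b (br a c))
    (R : Submodule K A)
    (hRideal : ∀ a : A, ∀ x ∈ R, br a x ∈ R ∧ br x a ∈ R)
    (hRsolv : ∃ m : ℕ, derSeriesIn br R m = ⊥)
    (hRmax : ∀ I : Submodule K A, (∀ a : A, ∀ x ∈ I, br a x ∈ I ∧ br x a ∈ I) →
      (∃ m : ℕ, derSeriesIn br I m = ⊥) → I ≤ R) :
    ∃ S : Submodule K A,
      (∀ x ∈ S, ∀ y ∈ S, br x y ∈ S) ∧
      (∀ x ∈ S, ∀ y ∈ S, br x y = -br y x) ∧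
      (∀ I : Submodule K A, I ≤ S →
        (∀ s ∈ S, ∀ x ∈ I, br s x ∈ I ∧ br x s ∈ I) →
        (∃ m : ℕ, derSeriesIn br I m = ⊥) → I = ⊥) ∧
      IsCompl S R := by
  have : LieAlgebra.HasTrivialRadical K (LeviQuotient leibniz) :=
    hasTrivialRadical_quotient_radical
  set q := leviQuotientMap leibniz
  have q_br : ∀ a b, q (br a b) = ⁅q a, q b⁆ := leviQuotientMap_br leibniz
  have hR : R = LinearMap.ker q := le_antisymm
    (le_ker_of_derSeriesIn_eq_bot q_br
      ((Submodule.map_top q).trans (LinearMap.range_eq_top.2 (leviQuotientMap_surjective leibniz)))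
      (fun a _ x hx ↦ (hRideal a x hx).1) hRsolv)
    (hRmax _ (fun a x hx ↦ by simp_all) (exists_derSeriesIn_ker_leviQuotientMap_eq_bot leibniz))
  obtain ⟨t, qt, br_t⟩ := exists_section_leviQuotientMap leibniz
  have hcompl : IsCompl (LinearMap.range t) (LinearMap.ker q) := isCompl_range_ker_of_leftInverse qt
  refine ⟨LinearMap.range t, ?_, ?_, fun I hIS hI hsolv ↦ ?_, hR ▸ hcompl⟩
  · rintro _ ⟨x, rfl⟩ _ ⟨y, rfl⟩
    exact ⟨⁅x, y⁆, (br_t x y).symm⟩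
  · rintro _ ⟨x, rfl⟩ _ ⟨y, rfl⟩
    rw [br_t, br_t, ← map_neg, lie_skew]
  · have map_range : (LinearMap.range t).map q = ⊤ :=
      eq_top_iff.2 fun x _ ↦ ⟨t x, ⟨x, rfl⟩, qt x⟩
    have I_le : I ≤ LinearMap.ker q :=
      le_ker_of_derSeriesIn_eq_bot q_br map_range (fun s hs x hx ↦ (hI s hs x hx).1) hsolv
    exact eq_bot_iff.2 (hcompl.inf_eq_bot ▸ le_inf hIS I_le)

/-- Levi's theorem: if `R` is the solvable radical (the unique maximal
solvable ideal) of a finite-dimensional (left) Leibniz algebra `A` over an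
algebraically closed field of characteristic zero, then there is a subalgebra `S`
of `A` which is a semisimple Lie algebra (the bracket on `S` is antisymmetric and
`S` has no nonzero solvable ideals) such that `A = S ⊕ R` as vector spaces. -/
theorem leibniz_levi_decomposition
    {K A : Type*} [Field K] [IsAlgClosed K] [CharZero K]
    [AddCommGroup A] [Module K A] [FiniteDimensional K A]
    (br : A →ₗ[K] A →ₗ[K] A)
    (leibniz : ∀ a b c : A, br a (br b c) = br (br a b) c + br b (br a c))
    (R : Submodule K A)
    (hRideal : ∀ a : A, ∀ x ∈ R, br a x ∈ R ∧ br x a ∈ R)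
    (hRsolv : ∃ m : ℕ, derSeriesIn br R m = ⊥)
    (hRmax : ∀ I : Submodule K A, (∀ a : A, ∀ x ∈ I, br a x ∈ I ∧ br x a ∈ I) →
      (∃ m : ℕ, derSeriesIn br I m = ⊥) → I ≤ R) :
    ∃ S : Submodule K A,
      (∀ x ∈ S, ∀ y ∈ S, br x y ∈ S) ∧
      (∀ x ∈ S, ∀ y ∈ S, br x y = -br y x) ∧
      (∀ I : Submodule K A, I ≤ S →
        (∀ s ∈ S, ∀ x ∈ I, br s x ∈ I ∧ br x s ∈ I) →
        (∃ m : ℕ, derSeriesIn br I m = ⊥) → I = ⊥) ∧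
      IsCompl S R :=
  leibniz_levi_decomposition_general br leibniz R hRideal hRsolv hRmax
end

section
/- Let A be a finite-dimensional (left) Leibniz algebra over a field of characteristic zero that admits a non-singular (invertible) derivation. Then A is nilpotent. -/
/-!
Grade `A` by the generalized eigenspaces of `D`, after passing to an algebraic closure. Left
multiplication by an element of degree `α` raises degrees by `α`; the degree `0` part vanishes
because `D` is injective, and for `α ≠ 0` only finitely many of the degrees `n * α + β` occur in
characteristic zero. So homogeneous elements act nilpotently. By the Leibniz identity their
left multiplications are closed under commutators, and Jacobson's theorem on weakly closed sets of
nilpotent operators makes the space of all left multiplications associatively nilpotent.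
-/

section OrderedMonoid

variable {M : Type*} [Monoid M] [Preorder M] [MulLeftMono M] [MulRightMono M] {a b : M}

lemma pow_mul_le_mul_pow_of_mul_le (h : b * a ≤ a * b) (n : ℕ) : b ^ n * a ≤ a * b ^ n := by
  induction n with
  | zero => simp
  | succ n ih =>
    calc b ^ (n + 1) * a = b ^ n * (b * a) := by rw [pow_succ, mul_assoc]
      _ ≤ b ^ n * (a * b) := by gcongr
      _ = b ^ n * a * b := (mul_assoc _ _ _).symm
      _ ≤ a * b ^ n * b := by gcongr
      _ = a * b ^ (n + 1) := by rw [pow_succ, mul_assoc]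

lemma mul_pow_le_pow_mul_pow_of_mul_le (h : b * a ≤ a * b) (n : ℕ) :
    (a * b) ^ n ≤ a ^ n * b ^ n := by
  induction n with
  | zero => simp
  | succ n ih =>
    calc (a * b) ^ (n + 1) = (a * b) ^ n * (a * b) := pow_succ _ _
      _ ≤ a ^ n * b ^ n * (a * b) := by gcongr
      _ = a ^ n * (b ^ n * a) * b := by simp only [mul_assoc]
      _ ≤ a ^ n * (a * b ^ n) * b := by
        gcongr a ^ n * ?_ * b
        exact pow_mul_le_mul_pow_of_mul_le h n
      _ = a ^ (n + 1) * b ^ (n + 1) := by simp only [pow_succ, mul_assoc]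

end OrderedMonoid

section IdemSemiring

variable {α : Type*} [IdemSemiring α] {u x : α}

lemma add_pow_le_mul_pow_add_pow (h : x * u ≤ u * (u + x + 1)) (n : ℕ) :
    (u + x) ^ n ≤ u * (u + x + 1) ^ n + x ^ n := by
  induction n with
  | zero => simp
  | succ n ih =>
    have h_left : u * (u + x) ^ n ≤ u * (u + x + 1) ^ (n + 1) := by
      rw [pow_succ']
      gcongr
      calc (u + x) ^ n ≤ (u + x + 1) ^ n := pow_le_pow_left' le_self_add n
        _ ≤ (u + x + 1) * (u + x + 1) ^ n := le_mul_of_one_le_left' le_add_self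
    have h_right : x * (u + x) ^ n ≤ u * (u + x + 1) ^ (n + 1) + x ^ (n + 1) :=
      calc x * (u + x) ^ n ≤ x * (u * (u + x + 1) ^ n + x ^ n) := by gcongr
        _ = x * u * (u + x + 1) ^ n + x ^ (n + 1) := by rw [mul_add, mul_assoc, pow_succ' x]
        _ ≤ u * (u + x + 1) * (u + x + 1) ^ n + x ^ (n + 1) := by gcongr
        _ = u * (u + x + 1) ^ (n + 1) + x ^ (n + 1) := by rw [mul_assoc, ← pow_succ']
    rw [pow_succ', add_mul]
    exact add_le (h_left.trans le_self_add) h_right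

lemma isNilpotent_add_of_mul_le (hu : IsNilpotent u) (hx : IsNilpotent x)
    (h : x * u ≤ u * (x + 1)) : IsNilpotent (u + x) := by
  obtain ⟨m, hm⟩ := hu
  obtain ⟨n, hn⟩ := hx
  have hxu : x * u ≤ u * (u + x + 1) :=
    h.trans (by gcongr; exact le_add_self)
  have h_comm : (u + x + 1) * u ≤ u * (u + x + 1) := by
    rw [add_mul, add_mul, one_mul]
    refine add_le (add_le ?_ hxu) (le_mul_of_one_le_right' le_add_self)
    gcongr
    rw [add_assoc]
    exact le_self_add
  have h_pow : (u + x) ^ n ≤ u * (u + x + 1) ^ n := by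
    simpa only [hn, add_zero] using add_pow_le_mul_pow_add_pow hxu n
  refine ⟨n * m, le_antisymm ?_ zero_le⟩
  calc (u + x) ^ (n * m) = ((u + x) ^ n) ^ m := pow_mul _ _ _
    _ ≤ (u * (u + x + 1) ^ n) ^ m := by gcongr
    _ ≤ u ^ m * ((u + x + 1) ^ n) ^ m :=
      mul_pow_le_pow_mul_pow_of_mul_le (pow_mul_le_mul_pow_of_mul_le h_comm n) m
    _ = 0 := by rw [hm, zero_mul]

end IdemSemiring

section WeaklyClosed

variable {R E : Type*} [CommRing R] [Ring E] [Algebra R E] {U : Submodule R E} {S : Set E}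

lemma isNilpotent_sup_span_singleton (hU : IsNilpotent U) {x : E} (hx : IsNilpotent x)
    (hUx : ∀ u ∈ U, ⁅u, x⁆ ∈ U) : IsNilpotent (U ⊔ R ∙ x) := by
  have h_span : IsNilpotent (R ∙ x) := by
    obtain ⟨n, hn⟩ := hx
    exact ⟨n, by simp [Submodule.span_pow, hn]⟩
  refine isNilpotent_add_of_mul_le hU h_span (Submodule.mul_le.2 ?_)
  intro y hy u hu
  obtain ⟨c, rfl⟩ := Submodule.mem_span_singleton.1 hy
  have h_swap : c • x * u = c • (u * x - ⁅u, x⁆) := by simp [Ring.lie_def]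
  rw [h_swap, mul_add, mul_one]
  refine Submodule.smul_mem _ c (sub_mem (Submodule.mem_sup_left ?_)
    (Submodule.mem_sup_right (hUx u hu)))
  exact Submodule.mul_mem_mul hu (Submodule.mem_span_singleton_self x)

lemma isNilpotent_mulLeft_add_mulRight {α : Type*} [Semiring α] {a : α} (ha : IsNilpotent a) :
    IsNilpotent (LinearMap.mulLeft ℕ a + LinearMap.mulRight ℕ a) :=
  (LinearMap.commute_mulLeft_right a a).isNilpotent_add
    ((LinearMap.isNilpotent_mulLeft_iff ℕ a).2 ha) ((LinearMap.isNilpotent_mulRight_iff ℕ a).2 ha)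

lemma exists_mem_notMem_forall_lie_mem (hU : IsNilpotent U)
    (hS : ∀ x ∈ S, ∀ y ∈ S, ⁅x, y⁆ ∈ S) (hSU : ¬ S ⊆ U) :
    ∃ x ∈ S, x ∉ U ∧ ∀ t ∈ S ∩ U, ⁅t, x⁆ ∈ U := by
  obtain ⟨x₀, hx₀S, hx₀U⟩ := Set.not_subset.1 hSU
  obtain ⟨n, hn⟩ := isNilpotent_mulLeft_add_mulRight hU
  set f := LinearMap.mulLeft ℕ U + LinearMap.mulRight ℕ U
  by_contra! h_escape
  -- Iterated commutators of `x₀` with elements of `U` can be continued outside `U` forever.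
  have h_chain (k : ℕ) : ∃ x ∈ S, x ∉ U ∧ x ∈ (f ^ k) (R ∙ x₀) := by
    induction k with
    | zero => exact ⟨x₀, hx₀S, hx₀U, Submodule.mem_span_singleton_self x₀⟩
    | succ k ih =>
      obtain ⟨x, hxS, hxU, hxk⟩ := ih
      obtain ⟨t, ht, htx⟩ := h_escape x hxS hxU
      refine ⟨⁅t, x⁆, hS t ht.1 x hxS, htx, ?_⟩
      rw [pow_succ', Module.End.mul_apply, Ring.lie_def]
      exact sub_mem (Submodule.mem_sup_left (Submodule.mul_mem_mul ht.2 hxk))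
        (Submodule.mem_sup_right (Submodule.mul_mem_mul hxk ht.2))
  obtain ⟨x, -, hxU, hx⟩ := h_chain n
  have hx_zero : x = 0 := by simpa [hn] using hx
  exact hxU (hx_zero ▸ zero_mem U)

/-- Jacobson's theorem on weakly closed sets. The conclusion is nilpotency in the semiring of
submodules: all sufficiently long products of elements of `S` vanish. -/
theorem isNilpotent_span_of_forall_lie_mem [IsNoetherian R E]
    (hS : ∀ x ∈ S, ∀ y ∈ S, ⁅x, y⁆ ∈ S) (hnil : ∀ x ∈ S, IsNilpotent x) :
    IsNilpotent (Submodule.span R S) := by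
  obtain ⟨U, ⟨hU_span, hU_nil⟩, hU_max⟩ := wellFounded_gt.has_min
    {U : Submodule R E | U ≤ Submodule.span R (S ∩ U) ∧ IsNilpotent U}
    ⟨⊥, bot_le, IsNilpotent.zero⟩
  suffices hSU : S ⊆ U by
    have h_span : Submodule.span R S = U :=
      le_antisymm (Submodule.span_le.2 hSU)
        (hU_span.trans (Submodule.span_mono Set.inter_subset_left))
    rwa [h_span]
  by_contra hSU
  obtain ⟨x, hxS, hxU, hx⟩ := exists_mem_notMem_forall_lie_mem hU_nil hS hSU
  have hU_comap : U ≤ U.comap (LinearMap.mulRight R x - LinearMap.mulLeft R x) :=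
    hU_span.trans (Submodule.span_le.2 hx)
  have hUx : ∀ u ∈ U, ⁅u, x⁆ ∈ U := fun _ hu ↦ hU_comap hu
  have hx_mem : x ∈ U ⊔ R ∙ x := Submodule.mem_sup_right (Submodule.mem_span_singleton_self x)
  refine hU_max (U ⊔ R ∙ x) ⟨sup_le ?_ ?_, isNilpotent_sup_span_singleton hU_nil (hnil x hxS) hUx⟩
    (left_lt_sup.2 fun h ↦ hxU (h (Submodule.mem_span_singleton_self x)))
  · exact hU_span.trans (Submodule.span_mono (Set.inter_subset_inter_right S
      (SetLike.coe_subset_coe.2 le_sup_left)))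
  · exact (Submodule.span_singleton_le_iff_mem _ _).2 (Submodule.subset_span ⟨hxS, hx_mem⟩)

end WeaklyClosed

section GeneralizedEigenspaces

open Module.End

lemma pow_add_apply_apply_eq_zero {R M N P : Type*} [CommSemiring R] [AddCommMonoid M]
    [AddCommMonoid N] [AddCommMonoid P] [Module R M] [Module R N] [Module R P]
    (B : M →ₗ[R] N →ₗ[R] P) {f : Module.End R M} {g : Module.End R N} {h : Module.End R P}
    (hB : ∀ x y, h (B x y) = B (f x) y + B x (g y)) {i j : ℕ} {x : M} {y : N}
    (hx : (f ^ i) x = 0) (hy : (g ^ j) y = 0) : (h ^ (i + j)) (B x y) = 0 := by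
  induction i generalizing x y j with
  | zero => simp_all
  | succ i ihi =>
    induction j generalizing y with
    | zero => simp_all
    | succ j ihj =>
      have h_left : (h ^ (i + 1 + j)) (B (f x) y) = 0 := by
        rw [add_right_comm, add_assoc]
        exact ihi hx hy
      have h_right : (h ^ (i + 1 + j)) (B x (g y)) = 0 := ihj hy
      rw [← add_assoc, pow_succ, mul_apply, hB, map_add, h_left, h_right, add_zero]

variable {R M : Type*} [CommRing R] [AddCommGroup M] [Module R M]

lemma apply_apply_mem_maxGenEigenspace (B : M →ₗ[R] M →ₗ[R] M) {D : Module.End R M}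
    (hD : ∀ a b, D (B a b) = B (D a) b + B a (D b)) {α β : R} {a b : M}
    (ha : a ∈ maxGenEigenspace D α) (hb : b ∈ maxGenEigenspace D β) :
    B a b ∈ maxGenEigenspace D (α + β) := by
  obtain ⟨i, hi⟩ := (mem_maxGenEigenspace D α a).1 ha
  obtain ⟨j, hj⟩ := (mem_maxGenEigenspace D β b).1 hb
  refine (mem_maxGenEigenspace D (α + β) _).2 ⟨i + j, pow_add_apply_apply_eq_zero B ?_ hi hj⟩
  intro x y
  simp only [LinearMap.sub_apply, LinearMap.smul_apply, one_apply, hD, map_sub, map_smul]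
  module

lemma maxGenEigenspace_zero_eq_bot {f : Module.End R M} (hf : Function.Injective f) :
    maxGenEigenspace f 0 = ⊥ := by
  refine (Submodule.eq_bot_iff _).2 fun x hx ↦ ?_
  obtain ⟨n, hn⟩ := (mem_maxGenEigenspace f 0 x).1 hx
  rw [zero_smul, sub_zero, pow_apply] at hn
  exact hf.iterate n (hn.trans (iterate_map_zero f n).symm)

variable [IsDomain R] [CharZero R] [Module.IsTorsionFree R M]

lemma exists_maxGenEigenspace_natCast_mul_add_eq_bot [IsNoetherian R M] (D : Module.End R M)
    {α : R} (hα : α ≠ 0) (β : R) : ∃ n : ℕ, maxGenEigenspace D (n * α + β) = ⊥ := by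
  have h_inj : Function.Injective fun n : ℕ ↦ (n * α + β : R) := fun m n h ↦ by simpa [hα] using h
  by_contra! h_ne_bot
  exact Set.infinite_of_injective_forall_mem h_inj h_ne_bot
    (WellFoundedGT.finite_ne_bot_of_iSupIndep D.independent_maxGenEigenspace)

lemma isNilpotent_of_mapsTo_maxGenEigenspace_add [IsNoetherian R M] {D T : Module.End R M}
    (hD : ⨆ β, maxGenEigenspace D β = ⊤) {α : R} (hα : α ≠ 0)
    (hT : ∀ β, Set.MapsTo T (maxGenEigenspace D β) (maxGenEigenspace D (α + β))) :
    IsNilpotent T := by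
  have h_iterate (β : R) (n : ℕ) {v : M} (hv : v ∈ maxGenEigenspace D β) :
      (T ^ n) v ∈ maxGenEigenspace D (n * α + β) := by
    induction n with
    | zero => simpa using hv
    | succ n ih =>
      rw [pow_succ', mul_apply]
      have h_degree : ((n + 1 : ℕ) : R) * α + β = α + (n * α + β) := by push_cast; ring
      exact h_degree ▸ hT _ ih
  have h_top : (⊤ : Submodule R M) ≤ maxGenEigenspace T 0 := by
    refine hD.ge.trans (iSup_le fun β v hv ↦ ?_)
    obtain ⟨n, hn⟩ := exists_maxGenEigenspace_natCast_mul_add_eq_bot D hα β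
    have hv_zero : (T ^ n) v = 0 := by simpa [hn] using h_iterate β n hv
    exact (mem_maxGenEigenspace T 0 v).2 ⟨n, by simpa using hv_zero⟩
  refine isNilpotent_iff_of_finite.2 fun v ↦ ?_
  simpa using (mem_maxGenEigenspace T 0 v).1 (h_top trivial)

lemma isNilpotent_apply_of_mem_maxGenEigenspace [IsNoetherian R M] (br : M →ₗ[R] M →ₗ[R] M)
    {D : Module.End R M} (hD : ∀ a b, D (br a b) = br (D a) b + br a (D b))
    (hD_inj : Function.Injective D) (hD_top : ⨆ β, maxGenEigenspace D β = ⊤) {α : R} {a : M}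
    (ha : a ∈ maxGenEigenspace D α) :
    IsNilpotent (br a : Module.End R M) := by
  obtain rfl | hα := eq_or_ne α 0
  · obtain rfl : a = 0 := by simpa [maxGenEigenspace_zero_eq_bot hD_inj] using ha
    simp
  · exact isNilpotent_of_mapsTo_maxGenEigenspace_add hD_top hα
      fun β b hb ↦ apply_apply_mem_maxGenEigenspace br hD ha hb

theorem isNilpotent_range_of_injective_derivation [IsNoetherianRing R] [Module.Finite R M]
    (br : M →ₗ[R] M →ₗ[R] M)
    (leibniz : ∀ a b c, br a (br b c) = br (br a b) c + br b (br a c)) {D : Module.End R M}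
    (hD : ∀ a b, D (br a b) = br (D a) b + br a (D b)) (hD_inj : Function.Injective D)
    (hD_top : ⨆ β, maxGenEigenspace D β = ⊤) :
    IsNilpotent (LinearMap.range br : Submodule R (Module.End R M)) := by
  have h_range : LinearMap.range br =
      Submodule.span R (br '' ⋃ α, (maxGenEigenspace D α : Set M)) := by
    rw [Submodule.span_image, ← Submodule.iSup_eq_span, hD_top, Submodule.map_top]
  have h_lie (a b : M) : ⁅(br a : Module.End R M), br b⁆ = br (br a b) := by
    ext c
    simp [Ring.lie_def, leibniz a b c]
  rw [h_range]
  refine isNilpotent_span_of_forall_lie_mem ?_ ?_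
  · rintro _ ⟨a, ha, rfl⟩ _ ⟨b, hb, rfl⟩
    obtain ⟨α, ha⟩ := Set.mem_iUnion.1 ha
    obtain ⟨β, hb⟩ := Set.mem_iUnion.1 hb
    exact ⟨br a b, Set.mem_iUnion.2 ⟨α + β, apply_apply_mem_maxGenEigenspace br hD ha hb⟩,
      (h_lie a b).symm⟩
  · rintro _ ⟨a, ha, rfl⟩
    obtain ⟨α, ha⟩ := Set.mem_iUnion.1 ha
    exact isNilpotent_apply_of_mem_maxGenEigenspace br hD hD_inj hD_top ha

end GeneralizedEigenspaces

section BaseChange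

open TensorProduct

variable {R M : Type*} (L : Type*) [CommSemiring R] [CommSemiring L] [Algebra R L]
  [AddCommMonoid M] [Module R M] {br : M →ₗ[R] M →ₗ[R] M}

lemma leibniz_baseChange (leibniz : ∀ a b c, br a (br b c) = br (br a b) c + br b (br a c))
    (x y z : L ⊗[R] M) :
    LinearMap.BilinMap.baseChange L br x (LinearMap.BilinMap.baseChange L br y z) =
      LinearMap.BilinMap.baseChange L br (LinearMap.BilinMap.baseChange L br x y) z +
        LinearMap.BilinMap.baseChange L br y (LinearMap.BilinMap.baseChange L br x z) := by
  set brL := LinearMap.BilinMap.baseChange L br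
  let mulBr := (LinearMap.mul L (Module.End L (L ⊗[R] M))).compl₁₂ brL brL
  have h : mulBr = brL.compr₂ brL + mulBr.flip := by
    ext a b c
    simp [brL, mulBr, leibniz a b c, tmul_add]
  exact LinearMap.congr_fun (LinearMap.congr_fun₂ h x y) z

lemma derivation_baseChange {D : M →ₗ[R] M} (hD : ∀ a b, D (br a b) = br (D a) b + br a (D b))
    (x y : L ⊗[R] M) :
    D.baseChange L (LinearMap.BilinMap.baseChange L br x y) =
      LinearMap.BilinMap.baseChange L br (D.baseChange L x) y +
        LinearMap.BilinMap.baseChange L br x (D.baseChange L y) := by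
  set brL := LinearMap.BilinMap.baseChange L br
  have h : brL.compr₂ (D.baseChange L) =
      brL.comp (D.baseChange L) + brL.compl₂ (D.baseChange L) := by
    ext a b
    simp [brL, hD, tmul_add]
  exact LinearMap.congr_fun₂ h x y

end BaseChange

section LowerCentralSeries

open TensorProduct

variable {K A : Type*} [Field K] [AddCommGroup A] [Module K A] (br : A →ₗ[K] A →ₗ[K] A)

lemma lcs_le_range_pow_smul_top (n : ℕ) :
    lcs br n ≤ (LinearMap.range br : Submodule K (Module.End K A)) ^ n • (⊤ : Submodule K A) := by
  induction n with
  | zero => exact (Submodule.one_smul ⊤).ge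
  | succ n ih =>
    refine Submodule.span_le.2 ?_
    rintro _ ⟨a, -, b, hb, rfl⟩
    rw [pow_succ', ← smul_eq_mul, Submodule.smul_assoc]
    exact Submodule.smul_mem_smul (LinearMap.mem_range_self br a) (ih hb)

lemma exists_lcs_eq_bot_of_isNilpotent_range
    (h : IsNilpotent (LinearMap.range br : Submodule K (Module.End K A))) :
    ∃ m, lcs br m = ⊥ := by
  obtain ⟨m, hm⟩ := h
  refine ⟨m, le_bot_iff.1 ((lcs_le_range_pow_smul_top br m).trans_eq ?_)⟩
  rw [hm]
  exact Submodule.bot_smul _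

variable (L : Type*) [Field L] [Algebra K L]

lemma lcs_le_comap_lcs_baseChange (n : ℕ) :
    lcs br n ≤ ((lcs (LinearMap.BilinMap.baseChange L br) n).restrictScalars K).comap
      (TensorProduct.mk K L A 1) := by
  induction n with
  | zero => exact le_top
  | succ n ih =>
    refine Submodule.span_le.2 ?_
    rintro _ ⟨a, -, b, hb, rfl⟩
    exact Submodule.subset_span ⟨1 ⊗ₜ a, trivial, 1 ⊗ₜ b, ih hb, by simp⟩

lemma lcs_eq_bot_of_lcs_baseChange_eq_bot {n : ℕ}
    (h : lcs (LinearMap.BilinMap.baseChange L br) n = ⊥) : lcs br n = ⊥ := by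
  refine (Submodule.eq_bot_iff _).2 fun a ha ↦ ?_
  have h_tmul : (1 : L) ⊗ₜ[K] a = 0 := by simpa [h] using lcs_le_comap_lcs_baseChange br L n ha
  exact Module.Flat.tensorProduct_mk_injective (R := K) A L (h_tmul.trans (tmul_zero A 1).symm)

end LowerCentralSeries

/-- a finite-dimensional (left) Leibniz algebra over a field of
characteristic zero admitting a non-singular derivation is nilpotent. -/
theorem leibniz_nilpotent_of_invertible_derivation
    {K A : Type*} [Field K] [CharZero K]
    [AddCommGroup A] [Module K A] [FiniteDimensional K A]
    (br : A →ₗ[K] A →ₗ[K] A)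
    (leibniz : ∀ a b c : A, br a (br b c) = br (br a b) c + br b (br a c))
    (D : A →ₗ[K] A)
    (hD : ∀ a b : A, D (br a b) = br (D a) b + br a (D b))
    (hinv : Function.Bijective D) :
    ∃ m : ℕ, lcs br m = ⊥ := by
  let L := AlgebraicClosure K
  obtain ⟨m, hm⟩ := exists_lcs_eq_bot_of_isNilpotent_range _ <|
    isNilpotent_range_of_injective_derivation (LinearMap.BilinMap.baseChange L br)
      (leibniz_baseChange L leibniz) (derivation_baseChange L hD)
      (Module.Flat.lTensor_preserves_injective_linearMap D hinv.injective)
      (Module.End.iSup_maxGenEigenspace_eq_top (D.baseChange L))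
  exact ⟨m, lcs_eq_bot_of_lcs_baseChange_eq_bot br L hm⟩
end
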